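/- arXiv:2305.10501 — 2 statements merged into one kernel-verified Lean document; each statement's English description precedes it below -/
import Mathlib

section
/- Fix integers n ≥ 1, N ≥ n+2 and a real p ≥ 1. The functional G_{n,N} : LC_c(ℝⁿ) → [0,∞), defined by G_{n,N}(f) = min over q ∈ 𝒫_N(f) of (J(f) − J(q)), is continuous with respect to the L^p(ℝⁿ) metric: if f, f_1, f_2, … ∈ LC_c(ℝⁿ) and ‖f_m − f‖_p → 0 as m → ∞, then G_{n,N}(f_m) → G_{n,N}(f). -/
open MeasureTheory Filter Set Metric

noncomputable section

/-- `n`-dimensional Euclidean space `ℝⁿ`. -/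
abbrev Eucl (n : ℕ) : Type := EuclideanSpace ℝ (Fin n)

/-- The epigraph `epi(ψ) = {(x,t) : t ≥ ψ(x)}` of an extended-real-valued function. -/
def epi {n : ℕ} (ψ : Eucl n → EReal) : Set (Eucl n × ℝ) :=
  {q : Eucl n × ℝ | ψ q.1 ≤ (q.2 : EReal)}

/-- `expNeg t = exp (−t)`, extended so that `exp (−(+∞)) = 0`
(the value at `⊥` is irrelevant: functions in `ℝ ∪ {+∞}` never take the value `⊥`). -/
def expNeg (t : EReal) : ℝ :=
  if t = ⊤ ∨ t = ⊥ then 0 else Real.exp (-t.toReal)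

/-- `negLog y = − log y` for `y > 0`, and `+∞` otherwise; for `f = exp(−ψ) ≥ 0`
this recovers `ψ` from `f`. -/
def negLog (y : ℝ) : EReal :=
  if y ≤ 0 then ⊤ else ((-Real.log y : ℝ) : EReal)

/-- Membership in the class `LC_c(ℝⁿ)`: `f = exp(−ψ)` for a convex (as a function into
`ℝ ∪ {+∞}`, encoded by convexity of the epigraph) lower semicontinuous coercive function `ψ`,
`ψ ≢ +∞`, the origin lies in `dom ψ`, and `dom ψ` is not contained in a hyperplane
(its affine span is everything). -/
def MemLCc {n : ℕ} (f : Eucl n → ℝ) : Prop :=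
  ∃ ψ : Eucl n → EReal,
    (∀ x, ψ x ≠ ⊥) ∧
    Convex ℝ (epi ψ) ∧
    LowerSemicontinuous ψ ∧
    Tendsto ψ (cocompact (Eucl n)) (nhds ⊤) ∧
    (∃ x, ψ x ≠ ⊤) ∧
    ψ 0 ≠ ⊤ ∧
    affineSpan ℝ {x : Eucl n | ψ x ≠ ⊤} = ⊤ ∧
    (∀ x, f x = expNeg (ψ x))

/-- The union of the vertical (upward) rays `{(xᵢ,t) : t ≥ tᵢ}`. -/
def verticalRays {n k : ℕ} (x : Fin k → Eucl n) (t : Fin k → ℝ) : Set (Eucl n × ℝ) :=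
  ⋃ i, {q : Eucl n × ℝ | q.1 = x i ∧ t i ≤ q.2}

/-- `p` is the inner linearization of `ψ` built from `k` points `(xᵢ,tᵢ)` of `epi ψ`:
its epigraph is the convex hull of the union of the vertical rays with those endpoints
(so `p = +∞` outside `conv{x₁,…,x_k}`). -/
def IsInnerLinearization {n : ℕ} (ψ : Eucl n → EReal) (k : ℕ) (p : Eucl n → EReal) : Prop :=
  ∃ (x : Fin k → Eucl n) (t : Fin k → ℝ),
    (∀ i, ψ (x i) ≤ ((t i : ℝ) : EReal)) ∧
    epi p = convexHull ℝ (verticalRays x t)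

/-- `𝒫_N(f)`: the set of log affine minorants `exp(−p)` of `f = exp(−ψ)` built from
`k ≤ N` points of `epi ψ` (at most `N` break points). -/
def PN {n : ℕ} (N : ℕ) (f : Eucl n → ℝ) : Set (Eucl n → ℝ) :=
  {q : Eucl n → ℝ | ∃ k : ℕ, 1 ≤ k ∧ k ≤ N ∧ ∃ p : Eucl n → EReal,
    IsInnerLinearization (fun x => negLog (f x)) k p ∧ ∀ x, q x = expNeg (p x)}

/-- The total mass `J(f) = ∫ f`. -/
def totalMass {n : ℕ} (f : Eucl n → ℝ) : ℝ := ∫ x, f x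

/-- `G_{n,N}(f) = min_{p ∈ 𝒫_N(f)} (J(f) − J(p))`. -/
def Gfun {n : ℕ} (N : ℕ) (f : Eucl n → ℝ) : ℝ :=
  sInf {d : ℝ | ∃ q ∈ PN N f, d = totalMass f - totalMass q}

/-- `g` is the symmetric decreasing rearrangement of `f`: for every `t > 0` the superlevel set
`{g ≥ t}` is the closed Euclidean ball centered at the origin (possibly degenerate or empty)
with the same Lebesgue measure as `{f ≥ t}`. -/
def IsSDR {n : ℕ} (f g : Eucl n → ℝ) : Prop :=
  ∀ t : ℝ, 0 < t →
    ({x : Eucl n | t ≤ g x} = ∅ ∨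
      ∃ r : ℝ, 0 ≤ r ∧ {x : Eucl n | t ≤ g x} = closedBall (0 : Eucl n) r) ∧
    volume {x : Eucl n | t ≤ g x} = volume {x : Eucl n | t ≤ f x}

/-- The properties of `exp (-ψ)` for `ψ` convex that are stable under small perturbations. -/
structure IsLogConcave {n : ℕ} (g : Eucl n → ℝ) : Prop where
  nonneg : ∀ x, 0 ≤ g x
  concave : ∀ x y s t a b, 0 ≤ a → 0 ≤ b → a + b = 1 → Real.exp (-s) ≤ g x →
    Real.exp (-t) ≤ g y → Real.exp (-(a * s + b * t)) ≤ g (a • x + b • y)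
  measurable : Measurable g

/-- Log concave functions dominated by `D` and at least `exp (-c)` on the ball of radius `r`
around `z`. -/
structure IsDominated {n : ℕ} (z : Eucl n) (r c : ℝ) (D : Eucl n → ℝ) (g : Eucl n → ℝ) : Prop
    extends IsLogConcave g where
  exp_le_of_mem_ball : ∀ y ∈ ball z r, Real.exp (-c) ≤ g y
  le_dom : ∀ x, g x ≤ D x

lemma IsDominated.integrable {n : ℕ} {z : Eucl n} {r c : ℝ} {D g : Eucl n → ℝ}
    (h : IsDominated z r c D g) (hD : Integrable D) : Integrable g :=
  hD.mono' h.measurable.aestronglyMeasurable <| Eventually.of_forall fun x => by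
    rw [Real.norm_of_nonneg (h.nonneg x)]; exact h.le_dom x

lemma expNeg_nonneg (t : EReal) : 0 ≤ expNeg t := by
  unfold expNeg; split_ifs <;> positivity

lemma exp_le_expNeg_iff {t : EReal} (ht : t ≠ ⊥) (s : ℝ) :
    Real.exp (-s) ≤ expNeg t ↔ t ≤ (s : EReal) := by
  induction t with
  | bot => exact absurd rfl ht
  | top => simp [expNeg, Real.exp_pos]
  | coe u => simp [expNeg]

lemma negLog_le_iff {y s : ℝ} : negLog y ≤ (s : EReal) ↔ Real.exp (-s) ≤ y := by
  unfold negLog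
  split_ifs with h
  · simp [h.trans_lt (Real.exp_pos _)]
  · rw [EReal.coe_le_coe_iff, ← Real.le_log_iff_exp_le (not_le.1 h), neg_le]

lemma measurable_of_measurableSet_exp_le {n : ℕ} {g : Eucl n → ℝ} (h0 : ∀ x, 0 ≤ g x)
    (h : ∀ s : ℝ, MeasurableSet {x | Real.exp (-s) ≤ g x}) : Measurable g := by
  refine measurable_of_Ici fun a => ?_
  rcases le_or_gt a 0 with ha | ha
  · convert MeasurableSet.univ
    ext x; simpa using ha.trans (h0 x)
  · convert h (-Real.log a) using 1
    ext x; simp [Real.exp_log ha]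

lemma MemLCc.isLogConcave {n : ℕ} {f : Eucl n → ℝ} (hf : MemLCc f) : IsLogConcave f := by
  obtain ⟨ψ, hbot, hconv, hlsc, -, -, -, -, hfψ⟩ := hf
  have key : ∀ x s, Real.exp (-s) ≤ f x ↔ ψ x ≤ (s : EReal) := fun x s => by
    rw [hfψ, exp_le_expNeg_iff (hbot x)]
  refine ⟨fun x => by rw [hfψ]; exact expNeg_nonneg _, ?_, ?_⟩
  · intro x y s t a b ha hb hab hx hy
    rw [key] at hx hy ⊢
    have := hconv (x := (x, s)) hx (y := (y, t)) hy ha hb hab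
    simpa [epi] using this
  · refine measurable_of_measurableSet_exp_le (fun x => by rw [hfψ]; exact expNeg_nonneg _)
      fun s => ?_
    simp_rw [key]
    exact (hlsc.isClosed_preimage _).measurableSet

lemma MemLCc.exists_ball {n : ℕ} {f : Eucl n → ℝ} (hf : MemLCc f) :
    ∃ z : Eucl n, ∃ r c : ℝ, 0 < r ∧ ∀ y ∈ ball z r, Real.exp (-c) ≤ f y := by
  have hlc := hf.isLogConcave
  obtain ⟨ψ, hbot, hconv, hlsc, -, -, -, hspan, hfψ⟩ := hf
  have key : ∀ x s, Real.exp (-s) ≤ f x ↔ ψ x ≤ (s : EReal) := fun x s => by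
    rw [hfψ, exp_le_expNeg_iff (hbot x)]
  let A : ℕ → Set (Eucl n) := fun k => {x | Real.exp (-(k : ℝ)) ≤ f x}
  have hAconv : ∀ k, Convex ℝ (A k) := by
    intro k x hx y hy a b ha hb hab
    have := hlc.concave x y k k a b ha hb hab hx hy
    rwa [← add_mul, hab, one_mul] at this
  have hdom : {x | ψ x ≠ ⊤} = ⋃ k, A k := by
    ext x
    simp only [mem_ofPred_eq, mem_iUnion, A, key]
    constructor
    · intro hx
      lift ψ x to ℝ using ⟨hx, hbot x⟩ with u
      obtain ⟨k, hk⟩ := exists_nat_ge u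
      exact ⟨k, by exact_mod_cast hk⟩
    · rintro ⟨k, hk⟩ h
      rw [h] at hk
      exact absurd (top_le_iff.1 hk) (EReal.coe_ne_top _)
  have hmono : Monotone A := by
    intro i j hij x hx
    exact le_trans (Real.exp_le_exp.2 (by simpa using hij)) hx
  have hdconv : Convex ℝ {x | ψ x ≠ ⊤} := by
    rw [hdom]
    exact (directed_of_isDirected_le hmono).convex_iUnion hAconv
  have hint := hdconv.interior_nonempty_iff_affineSpan_eq_top.2 hspan
  have hpos : 0 < volume {x | ψ x ≠ ⊤} :=
    (isOpen_interior.measure_pos volume hint).trans_le (measure_mono interior_subset)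
  obtain ⟨k, hk⟩ : ∃ k, (interior (A k)).Nonempty := by
    by_contra! hcon
    refine hpos.ne' ?_
    rw [hdom]
    refine measure_iUnion_null fun k => measure_mono_null ?_ ((hAconv k).addHaar_frontier volume)
    intro x hx
    exact ⟨subset_closure hx, by rw [hcon k]; exact notMem_empty x⟩
  obtain ⟨z, hz⟩ := hk
  obtain ⟨r, hr, hsub⟩ := Metric.isOpen_iff.1 isOpen_interior z hz
  exact ⟨z, r, k, hr, fun y hy => (interior_subset (hsub hy) : y ∈ A k)⟩

lemma MemLCc.exists_decay {n : ℕ} {f : Eucl n → ℝ} (hf : MemLCc f) (s : ℝ) (z : Eucl n) :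
    ∃ R > 0, ∀ x, R ≤ ‖x - z‖ → f x < Real.exp (-s) := by
  obtain ⟨ψ, hbot, -, -, hcoer, -, -, -, hfψ⟩ := hf
  have h := hcoer.eventually (lt_mem_nhds (EReal.coe_lt_top s))
  rw [Metric.cobounded_eq_cocompact.symm] at h
  obtain ⟨R, hR⟩ := (Metric.hasBasis_cobounded_compl_closedBall z).mem_iff.1 h
  refine ⟨max R 0 + 1, by positivity, fun x hx => ?_⟩
  have hx' : x ∈ (closedBall z R)ᶜ := by
    simp only [mem_compl_iff, mem_closedBall, dist_eq_norm, not_le]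
    linarith [le_max_left R 0]
  have := hR.2 hx'
  rw [← not_le, hfψ, exp_le_expNeg_iff (hbot x), not_le]
  exact this

lemma MemLCc.exists_bound {n : ℕ} {f : Eucl n → ℝ} (hf : MemLCc f) :
    ∃ M > 0, ∀ x, f x ≤ M := by
  obtain ⟨R, hR, hdec⟩ := hf.exists_decay 0 0
  have hlc := hf.isLogConcave
  obtain ⟨ψ, hbot, -, hlsc, -, -, -, -, hfψ⟩ := hf
  obtain ⟨a, -, ha⟩ := LowerSemicontinuousOn.exists_isMinOn
    ⟨0, mem_closedBall_self hR.le⟩ (isCompact_closedBall (0 : Eucl n) R)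
    (hlsc.lowerSemicontinuousOn _)
  refine ⟨f a + 1, by linarith [hlc.nonneg a], fun x => ?_⟩
  rcases le_total R ‖x‖ with hx | hx
  · have := hdec x (by simpa using hx)
    simp only [neg_zero, Real.exp_zero] at this
    linarith [hlc.nonneg a]
  · have h1 : ψ a ≤ ψ x := ha (by simpa using hx)
    have : f x ≤ f a := by
      rcases (hlc.nonneg x).eq_or_lt with h0 | h0
      · rw [← h0]; exact hlc.nonneg a
      · have hlog : Real.exp (-(-Real.log (f x))) = f x := by rw [neg_neg, Real.exp_log h0]
        rw [← hlog, hfψ a, exp_le_expNeg_iff (hbot a)]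
        refine h1.trans ?_
        rw [← exp_le_expNeg_iff (hbot x), ← hfψ, hlog]
    linarith

/-- If `h` drops below `exp (-s)` at `y`, it does so on at least half of each ball around `y`. -/
lemma IsLogConcave.volume_ball_le {n : ℕ} {h : Eucl n → ℝ} (hh : IsLogConcave h)
    {y : Eucl n} {ρ s : ℝ} (hy : h y < Real.exp (-s)) :
    volume (ball y ρ) ≤ 2 * volume {w | w ∈ ball y ρ ∧ h w < Real.exp (-s)} := by
  set A := {w | w ∈ ball y ρ ∧ h w < Real.exp (-s)}
  have hA : MeasurableSet A :=
    measurableSet_ball.inter (measurableSet_lt hh.measurable measurable_const)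
  have hcov : ball y ρ ⊆ A ∪ (fun w => (y + y) - w) ⁻¹' A := by
    intro w hw
    by_contra hcon
    simp only [mem_union, mem_preimage, not_or] at hcon
    have hw' : (y + y) - w ∈ ball y ρ := by
      rw [mem_ball, dist_eq_norm] at hw ⊢
      rwa [show y + y - w - y = -(w - y) by abel, norm_neg]
    have h1 : Real.exp (-s) ≤ h w := not_lt.1 fun h' => hcon.1 ⟨hw, h'⟩
    have h2 : Real.exp (-s) ≤ h (y + y - w) := not_lt.1 fun h' => hcon.2 ⟨hw', h'⟩
    have h3 := hh.concave w (y + y - w) s s (1/2) (1/2) (by norm_num) (by norm_num)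
      (by norm_num) h1 h2
    rw [← smul_add, add_sub_cancel, ← two_smul ℝ y, smul_smul] at h3
    norm_num at h3
    rw [show -(1/2 * s) + -(1/2 * s) = -s by ring] at h3
    exact absurd hy (not_lt.2 h3)
  calc volume (ball y ρ) ≤ volume A + volume ((fun w => (y + y) - w) ⁻¹' A) :=
        (measure_mono hcov).trans (measure_union_le _ _)
    _ = 2 * volume A := by
        rw [(Measure.measurePreserving_sub_left (volume : Measure (Eucl n)) (y + y)).measure_preimage hA.nullMeasurableSet,
          two_mul]

lemma IsLogConcave.exp_le_of_close {n : ℕ} {g h : Eucl n → ℝ} (hh : IsLogConcave h)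
    {y : Eucl n} {ρ u s η : ℝ} (hball : ∀ w ∈ ball y ρ, Real.exp (-u) ≤ g w)
    (hη : η ≤ Real.exp (-u) - Real.exp (-s))
    (hvol : 2 * volume {w | η ≤ |g w - h w|} < volume (ball (0 : Eucl n) ρ)) :
    Real.exp (-s) ≤ h y := by
  by_contra! hy
  refine hvol.not_ge ?_
  rw [← Measure.addHaar_ball_center volume y ρ]
  refine (hh.volume_ball_le hy).trans ?_
  gcongr with w
  rintro ⟨hw, hw'⟩
  have := hball w hw
  exact le_trans (by linarith) (le_abs_self _)

/-- `q = exp (-p)` where the epigraph of `p` is the convex hull of the vertical rays starting at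
the points `(x i, t i)`, expressed by explicit convex combinations. -/
structure IsHull {n k : ℕ} (x : Fin k → Eucl n) (t : Fin k → ℝ) (q : Eucl n → ℝ) : Prop where
  nonneg : ∀ y, 0 ≤ q y
  exp_le_iff : ∀ y s, Real.exp (-s) ≤ q y ↔
    ∃ μ ∈ stdSimplex ℝ (Fin k), ∑ i, μ i • x i = y ∧ ∑ i, μ i * t i ≤ s

lemma mem_convexHull_verticalRays_iff {n k : ℕ} (x : Fin k → Eucl n) (t : Fin k → ℝ)
    (y : Eucl n) (s : ℝ) : (y, s) ∈ convexHull ℝ (verticalRays x t) ↔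
      ∃ μ ∈ stdSimplex ℝ (Fin k), ∑ i, μ i • x i = y ∧ ∑ i, μ i * t i ≤ s := by
  constructor
  · intro h
    let C : Set (Eucl n × ℝ) := {v | ∃ μ ∈ stdSimplex ℝ (Fin k), ∑ i, μ i • x i = v.1 ∧
      ∑ i, μ i * t i ≤ v.2}
    have hC : Convex ℝ C := by
      rintro v ⟨μ, hμ, h1, h2⟩ w ⟨ν, hν, h3, h4⟩ a b ha hb hab
      refine ⟨a • μ + b • ν, convex_stdSimplex ℝ _ hμ hν ha hb hab, ?_, ?_⟩
      · simp only [Pi.add_apply, Pi.smul_apply, smul_eq_mul, add_smul, mul_smul,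
          Finset.sum_add_distrib, ← Finset.smul_sum, h1, h3, Prod.fst_add, Prod.smul_fst]
      · simp only [Pi.add_apply, Pi.smul_apply, smul_eq_mul, add_mul, mul_assoc,
          Finset.sum_add_distrib, ← Finset.mul_sum, Prod.snd_add, Prod.smul_snd]
        gcongr
    have hsub : verticalRays x t ⊆ C := by
      intro v hv
      obtain ⟨i, h1, h2⟩ := mem_iUnion.1 hv
      refine ⟨Pi.single i 1, single_mem_stdSimplex ℝ i, ?_, ?_⟩
      · simp [Pi.single_apply, ite_smul, h1]
      · simpa [Pi.single_apply, ite_mul] using h2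
    exact convexHull_min hsub hC h
  · rintro ⟨μ, hμ, h1, h2⟩
    have : (y, s) = ∑ i, μ i • ((x i, t i + (s - ∑ i, μ i * t i)) : Eucl n × ℝ) := by
      ext1
      · simp [Prod.fst_sum, h1]
      · simp only [Prod.snd_sum, Prod.smul_snd, smul_eq_mul, mul_add, Finset.sum_add_distrib,
          ← Finset.sum_mul, hμ.2]
        ring
    rw [this]
    refine (convex_convexHull ℝ _).sum_mem (fun i _ => hμ.1 i) hμ.2 fun i _ => ?_
    refine subset_convexHull ℝ _ (mem_iUnion.2 ⟨i, rfl, ?_⟩)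
    simp only
    linarith

lemma exists_isHull_of_mem_PN {n N : ℕ} {g q : Eucl n → ℝ} (hq : q ∈ PN N g) :
    ∃ k, 1 ≤ k ∧ k ≤ N ∧ ∃ (x : Fin k → Eucl n) (t : Fin k → ℝ),
      (∀ i, Real.exp (-t i) ≤ g (x i)) ∧ IsHull x t q := by
  obtain ⟨k, hk, hkN, p, ⟨x, t, hxt, hp⟩, hqp⟩ := hq
  have hmem : ∀ y (s : ℝ), p y ≤ (s : EReal) ↔
      ∃ μ ∈ stdSimplex ℝ (Fin k), ∑ i, μ i • x i = y ∧ ∑ i, μ i * t i ≤ s := fun y s => by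
    rw [← mem_convexHull_verticalRays_iff, ← hp]; rfl
  have : Nonempty (Fin k) := ⟨⟨0, hk⟩⟩
  have hbot : ∀ y, p y ≠ ⊥ := by
    intro y hy
    obtain ⟨i, hi⟩ := Finite.exists_min t
    obtain ⟨μ, hμ, -, h2⟩ := (hmem y (t i - 1)).1 (by rw [hy]; exact bot_le)
    have : ∑ j, μ j * t i ≤ ∑ j, μ j * t j :=
      Finset.sum_le_sum fun j _ => mul_le_mul_of_nonneg_left (hi j) (hμ.1 j)
    rw [← Finset.sum_mul, hμ.2] at this
    linarith
  refine ⟨k, hk, hkN, x, t, fun i => negLog_le_iff.1 (hxt i),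
    fun y => by rw [hqp]; exact expNeg_nonneg _, fun y s => ?_⟩
  rw [hqp, exp_le_expNeg_iff (hbot y), hmem]

lemma exists_isHull_mem_PN {n N k : ℕ} {g : Eucl n → ℝ} (hk : 1 ≤ k) (hkN : k ≤ N)
    (x : Fin k → Eucl n) (t : Fin k → ℝ) (hxt : ∀ i, Real.exp (-t i) ≤ g (x i)) :
    ∃ q ∈ PN N g, IsHull x t q := by
  have hmin : ∀ y, ∃ u : EReal, u ≠ ⊥ ∧ ∀ s : ℝ, u ≤ (s : EReal) ↔
      ∃ μ ∈ stdSimplex ℝ (Fin k), ∑ i, μ i • x i = y ∧ ∑ i, μ i * t i ≤ s := by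
    intro y
    let K : Set (Fin k → ℝ) := stdSimplex ℝ (Fin k) ∩ {μ | ∑ i, μ i • x i = y}
    rcases K.eq_empty_or_nonempty with hK | hK
    · refine ⟨⊤, by simp, fun s => ⟨fun h => absurd (top_le_iff.1 h) (EReal.coe_ne_top _), ?_⟩⟩
      rintro ⟨μ, hμ, h1, -⟩
      exact absurd (show μ ∈ K from ⟨hμ, h1⟩) (by rw [hK]; exact notMem_empty _)
    · have hKc : IsCompact K := (isCompact_stdSimplex ℝ (Fin k)).inter_right
        (isClosed_eq (by fun_prop) continuous_const)
      obtain ⟨ν, hν, hνmin⟩ := hKc.exists_isMinOn hK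
        (f := fun μ => ∑ i, μ i * t i) (Continuous.continuousOn (by fun_prop))
      refine ⟨((∑ i, ν i * t i : ℝ) : EReal), EReal.coe_ne_bot _, fun s => ?_⟩
      rw [EReal.coe_le_coe_iff]
      exact ⟨fun h => ⟨ν, hν.1, hν.2, h⟩, fun ⟨μ, hμ, h1, h2⟩ =>
        le_trans (hνmin (show μ ∈ K from ⟨hμ, h1⟩)) h2⟩
  choose p hbot hp using hmin
  refine ⟨fun y => expNeg (p y), ⟨k, hk, hkN, p, ⟨x, t, fun i => negLog_le_iff.2 (hxt i), ?_⟩,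
    fun y => rfl⟩, fun y => expNeg_nonneg _, fun y s => by rw [exp_le_expNeg_iff (hbot y), hp]⟩
  ext ⟨y, s⟩
  rw [mem_convexHull_verticalRays_iff, ← hp]
  rfl

lemma IsHull.measurable {n k : ℕ} {x : Fin k → Eucl n} {t : Fin k → ℝ} {q : Eucl n → ℝ}
    (hq : IsHull x t q) : Measurable q := by
  refine measurable_of_measurableSet_exp_le hq.nonneg fun s => ?_
  have hK : IsCompact (stdSimplex ℝ (Fin k) ∩ {μ | ∑ i, μ i * t i ≤ s}) :=
    (isCompact_stdSimplex ℝ (Fin k)).inter_right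
      (isClosed_le (by fun_prop) continuous_const)
  have hc : Continuous fun μ : Fin k → ℝ => ∑ i, μ i • x i := by fun_prop
  convert (hK.image hc).isClosed.measurableSet using 1
  ext y
  rw [mem_ofPred_eq, hq.exp_le_iff]
  exact ⟨fun ⟨μ, h, h1, h2⟩ => ⟨μ, ⟨h, h2⟩, h1⟩, fun ⟨μ, ⟨h, h2⟩, h1⟩ => ⟨μ, h, h1, h2⟩⟩

lemma IsLogConcave.exp_le_sum {n k : ℕ} {g : Eucl n → ℝ} (hg : IsLogConcave g)
    {x : Fin k → Eucl n} {t : Fin k → ℝ} (hxt : ∀ i, Real.exp (-t i) ≤ g (x i))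
    {μ : Fin k → ℝ} (hμ : μ ∈ stdSimplex ℝ (Fin k)) :
    Real.exp (-∑ i, μ i * t i) ≤ g (∑ i, μ i • x i) := by
  let C : Set (Eucl n × ℝ) := {v | Real.exp (-v.2) ≤ g v.1}
  have hC : Convex ℝ C := fun v hv w hw a b ha hb hab =>
    hg.concave v.1 w.1 v.2 w.2 a b ha hb hab hv hw
  have := hC.sum_mem (t := Finset.univ) (w := μ) (z := fun i => (x i, t i))
    (fun i _ => hμ.1 i) hμ.2 (fun i _ => hxt i)
  change Real.exp (-(∑ i, μ i • ((x i, t i) : Eucl n × ℝ)).2)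
    ≤ g (∑ i, μ i • ((x i, t i) : Eucl n × ℝ)).1 at this
  simpa [Prod.fst_sum, Prod.snd_sum] using this

lemma le_of_exp_neg_le {a b : ℝ} (hb : 0 ≤ b) (h : ∀ s, Real.exp (-s) ≤ a → Real.exp (-s) ≤ b) :
    a ≤ b := by
  rcases le_or_gt a 0 with ha | ha
  · exact ha.trans hb
  · simpa [Real.exp_log ha] using h (-Real.log a) (by simp [Real.exp_log ha])

lemma IsHull.le {n k : ℕ} {g q : Eucl n → ℝ} (hg : IsLogConcave g)
    {x : Fin k → Eucl n} {t : Fin k → ℝ} (hq : IsHull x t q)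
    (hxt : ∀ i, Real.exp (-t i) ≤ g (x i)) (y : Eucl n) : q y ≤ g y := by
  refine le_of_exp_neg_le (hg.nonneg y) fun s hs => ?_
  obtain ⟨μ, hμ, h1, h2⟩ := (hq.exp_le_iff y s).1 hs
  rw [← h1]
  exact (Real.exp_le_exp.2 (neg_le_neg h2)).trans (hg.exp_le_sum hxt hμ)

lemma integrable_exp_sub_norm {n : ℕ} (z : Eucl n) (b : ℝ) {R : ℝ} (hR : 0 < R) :
    Integrable fun x : Eucl n => Real.exp (b - ‖x - z‖ / R) := by
  have h1 : Integrable fun x : Eucl n => (1 + ‖x‖) ^ (-((n + 1 : ℕ) : ℝ)) :=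
    integrable_one_add_norm (by simp)
  have h2 : Integrable fun x : Eucl n => Real.exp (-‖x‖) := by
    refine (h1.const_mul (Real.exp 1 * (n + 1).factorial)).mono'
      (Continuous.aestronglyMeasurable (by fun_prop)) (Eventually.of_forall fun x => ?_)
    have h3 := Real.pow_div_factorial_le_exp (x := 1 + ‖x‖) (by positivity) (n + 1)
    rw [Real.norm_of_nonneg (Real.exp_pos _).le, Real.rpow_neg (by positivity),
      Real.rpow_natCast, Real.exp_neg, ← div_eq_mul_inv, le_div_iff₀ (by positivity)]
    rw [div_le_iff₀ (by positivity), Real.exp_add] at h3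
    rw [inv_mul_le_iff₀ (Real.exp_pos _)]
    linarith
  have h3 := ((h2.comp_smul (inv_ne_zero hR.ne')).comp_sub_right z).const_mul (Real.exp b)
  refine h3.congr (Eventually.of_forall fun x => ?_)
  simp only [norm_smul, norm_inv, Real.norm_of_nonneg hR.le, ← Real.exp_add]
  congr 1
  ring

/-- Every log concave function close in measure to a fixed `f ∈ LC_c` satisfies uniform bounds. -/
lemma MemLCc.exists_isDominated {n : ℕ} {f : Eucl n → ℝ} (hf : MemLCc f) :
    ∃ (z : Eucl n) (r c B : ℝ) (D : Eucl n → ℝ) (η ρ : ℝ), 0 < r ∧ 0 < η ∧ 0 < ρ ∧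
      Integrable D ∧ (∀ x, 0 ≤ D x) ∧ (∀ x, D x ≤ Real.exp B) ∧
      ∀ g, IsLogConcave g →
        2 * volume {w | η ≤ |f w - g w|} < volume (ball (0 : Eucl n) ρ) →
        IsDominated z r c D g := by
  obtain ⟨z, r₀, c, hr₀, hball⟩ := hf.exists_ball
  obtain ⟨M, hM0, hM⟩ := hf.exists_bound
  obtain ⟨R, hR0, hR⟩ := hf.exists_decay (c + 1 + 2) z
  have hflc := hf.isLogConcave
  set r := r₀ / 2 with hr
  have hr0 : 0 < r := by positivity
  set K := c + 1 + 2 * Real.log (M + 2) with hK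
  set b := max (K + 1) (-(c + 1)) with hb
  set η := min (min (Real.exp (-c) - Real.exp (-(c + 1)))
    (Real.exp (-(c + 1 + 1 / 2)) - Real.exp (-(c + 1 + 2)))) 1 with hη
  have hη1 : η ≤ Real.exp (-c) - Real.exp (-(c + 1)) := (min_le_left _ _).trans (min_le_left _ _)
  have hη2 : η ≤ Real.exp (-(c + 1 + 1 / 2)) - Real.exp (-(c + 1 + 2)) :=
    (min_le_left _ _).trans (min_le_right _ _)
  have hη3 : η ≤ 1 := min_le_right _ _
  refine ⟨z, r, c + 1, b, fun x => Real.exp (b - ‖x - z‖ / (2 * R)), η, r / 2, hr0, ?_,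
    by positivity, integrable_exp_sub_norm z b (by positivity), fun x => (Real.exp_pos _).le,
    fun x => Real.exp_le_exp.2 (sub_le_self _ (by positivity)), ?_⟩
  · refine lt_min (lt_min ?_ ?_) one_pos <;>
      exact sub_pos.2 (Real.exp_lt_exp.2 (by linarith))
  intro g hg hvol
  have hvol' : 2 * volume {w | η ≤ |g w - f w|} < volume (ball (0 : Eucl n) (r / 2)) := by
    simpa only [abs_sub_comm] using hvol
  have hgball : ∀ y ∈ ball z r, Real.exp (-(c + 1)) ≤ g y := by
    intro y hy
    refine hg.exp_le_of_close (u := c) (fun w hw => hball w ?_) hη1 hvol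
    rw [mem_ball] at hy hw ⊢
    linarith [dist_triangle w y z]
  have hmid : ∀ x s, Real.exp (-s) ≤ g x → ∀ w ∈ ball ((1 / 2 : ℝ) • z + (1 / 2 : ℝ) • x) (r / 2),
      Real.exp (-((c + 1 + s) / 2)) ≤ g w := by
    intro x s hs w hw
    have hv : (2 : ℝ) • w - x ∈ ball z r := by
      rw [mem_ball, dist_eq_norm] at hw ⊢
      have : (2 : ℝ) • w - x - z = (2 : ℝ) • (w - ((1 / 2 : ℝ) • z + (1 / 2 : ℝ) • x)) := by
        module
      rw [this, norm_smul, Real.norm_of_nonneg zero_le_two]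
      linarith
    have := hg.concave _ x _ s (1 / 2) (1 / 2) (by norm_num) (by norm_num) (by norm_num)
      (hgball _ hv) hs
    convert this using 2
    · ring
    · module
  have hgdec : ∀ x, 2 * R ≤ ‖x - z‖ → g x < Real.exp (-(c + 1 + 1)) := by
    intro x hx
    by_contra! hcon
    have h1 := hflc.exp_le_of_close (u := c + 1 + 1 / 2)
      (fun w hw => by
        have := hmid x _ hcon w hw
        rwa [show (c + 1 + (c + 1 + 1)) / 2 = c + 1 + 1 / 2 by ring] at this) hη2 hvol'
    refine (hR _ ?_).not_ge h1
    have : (1 / 2 : ℝ) • z + (1 / 2 : ℝ) • x - z = (1 / 2 : ℝ) • (x - z) := by module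
    rw [this, norm_smul, Real.norm_of_nonneg (by norm_num)]
    linarith
  have hgbd : ∀ x, g x ≤ Real.exp K := by
    intro x
    by_contra! hcon
    have h1 := hflc.exp_le_of_close (u := -Real.log (M + 2)) (s := -Real.log (M + 1))
      (fun w hw => by
        have := hmid x (-K) (by rw [neg_neg]; exact hcon.le) w hw
        rwa [show (c + 1 + -K) / 2 = -Real.log (M + 2) by rw [hK]; ring] at this)
      (by rw [neg_neg, neg_neg, Real.exp_log (by positivity), Real.exp_log (by positivity)]
          linarith) hvol'
    rw [neg_neg, Real.exp_log (by positivity)] at h1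
    linarith [hM ((1 / 2 : ℝ) • z + (1 / 2 : ℝ) • x)]
  refine ⟨hg, hgball, fun x => ?_⟩
  rcases le_total (2 * R) ‖x - z‖ with hx | hx
  · refine le_of_exp_neg_le (Real.exp_pos _).le fun s hs => Real.exp_le_exp.2 ?_
    have hpos : 0 < ‖x - z‖ := by linarith
    set l := 2 * R / ‖x - z‖ with hl
    have hl0 : 0 < l := by positivity
    have hl1 : l ≤ 1 := (div_le_one hpos).2 hx
    have h1 := hg.concave z x (c + 1) s (1 - l) l (by linarith) hl0.le (by ring)
      (hgball z (mem_ball_self hr0)) hs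
    have h2 := hgdec ((1 - l) • z + l • x) (by
      rw [show (1 - l) • z + l • x - z = l • (x - z) by module, norm_smul,
        Real.norm_of_nonneg hl0.le, hl, div_mul_cancel₀ _ hpos.ne'])
    have h3 := Real.exp_lt_exp.1 (h1.trans_lt h2)
    have h4 : 1 < l * (s - (c + 1)) := by linarith
    have h5 : ‖x - z‖ / (2 * R) < s - (c + 1) := by
      rw [div_lt_iff₀ (by positivity)]
      rw [hl, div_mul_eq_mul_div, lt_div_iff₀ hpos] at h4
      linarith
    linarith [le_max_right (K + 1) (-(c + 1))]
  · refine (hgbd x).trans (Real.exp_le_exp.2 ?_)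
    have : ‖x - z‖ / (2 * R) ≤ 1 := (div_le_one (by positivity)).2 hx
    linarith [le_max_left (K + 1) (-(c + 1))]

/-- Contracting the mass above level `exp (-T)` costs little. -/
lemma integral_le_of_contraction {n : ℕ} {q q' D : Eucl n → ℝ} {B T θ τ : ℝ} {v : Eucl n}
    (hD : Integrable D) (hD0 : ∀ x, 0 ≤ D x) (hDB : ∀ x, D x ≤ Real.exp B)
    (hq : Integrable q) (hqD : ∀ x, q x ≤ D x) (hq' : Integrable q') (hq'0 : ∀ x, 0 ≤ q' x)
    (hθ : 0 < θ) (hθ1 : θ ≤ 1)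
    (h : ∀ y s, s ≤ T → Real.exp (-s) ≤ q y → Real.exp (-(θ * s + τ)) ≤ q' (θ • y + v)) :
    θ ^ n * Real.exp (-(B * (1 - θ) + τ)) *
      ((∫ x, q x) - ∫ x, min (D x) (Real.exp (-T))) ≤ ∫ x, q' x := by
  have hmin : Integrable fun x => min (D x) (Real.exp (-T)) :=
    hD.mono' (hD.aestronglyMeasurable.inf aestronglyMeasurable_const)
      (Eventually.of_forall fun x => by
        rw [Real.norm_of_nonneg (le_min (hD0 x) (Real.exp_pos _).le)]; exact min_le_left _ _)
  have hscale : ∫ x, q' (θ • x + v) = (θ ^ n)⁻¹ * ∫ x, q' x := by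
    rw [Measure.integral_comp_smul volume (fun x => q' (x + v)) θ, integral_add_right_eq_self,
      finrank_euclideanSpace_fin, abs_of_nonneg (by positivity), smul_eq_mul]
  have hint : Integrable fun x => q' (θ • x + v) :=
    (hq'.comp_add_right v).comp_smul hθ.ne'
  have hle : ∫ x, Real.exp (-(B * (1 - θ) + τ)) * (q x - min (D x) (Real.exp (-T))) ≤
      ∫ x, q' (θ • x + v) := by
    refine integral_mono ((hq.sub hmin).const_mul _) hint fun y => ?_
    simp only
    rcases le_or_gt (q y) (Real.exp (-T)) with hy | hy
    · exact (mul_nonpos_of_nonneg_of_nonpos (Real.exp_pos _).le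
        (sub_nonpos.2 (le_min (hqD y) hy))).trans (hq'0 _)
    · have hpos : 0 < q y := (Real.exp_pos _).trans hy
      set s := -Real.log (q y) with hs
      have hexp : Real.exp (-s) = q y := by rw [hs, neg_neg, Real.exp_log hpos]
      have hsT : s ≤ T := by
        rw [← hexp, Real.exp_lt_exp] at hy; linarith
      have hsB : -B ≤ s := by
        have := (hqD y).trans (hDB y)
        rw [← hexp, Real.exp_le_exp] at this; linarith
      refine le_trans ?_ (h y s hsT hexp.le)
      calc Real.exp (-(B * (1 - θ) + τ)) * (q y - min (D y) (Real.exp (-T)))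
          ≤ Real.exp (-(B * (1 - θ) + τ)) * Real.exp (-s) := by
            rw [hexp]
            gcongr
            exact sub_le_self _ (le_min (hD0 y) (Real.exp_pos _).le)
        _ ≤ Real.exp (-(θ * s + τ)) := by
            rw [← Real.exp_add, Real.exp_le_exp]
            nlinarith
  rw [integral_const_mul, integral_sub hq hmin, hscale] at hle
  rw [mul_assoc]
  calc θ ^ n * _ ≤ θ ^ n * ((θ ^ n)⁻¹ * ∫ x, q' x) := by gcongr
    _ = ∫ x, q' x := by rw [mul_inv_cancel_left₀ (by positivity)]

/-- Moving the points `X i` towards `X i₀` by the factors `(1 + w i)⁻¹` keeps a contraction of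
each convex combination in the convex hull. -/
lemma exists_stdSimplex_contraction {E : Type*} [AddCommGroup E] [Module ℝ E] {k : ℕ}
    {X : Fin k → E} {w : Fin k → ℝ} {μ : Fin k → ℝ} {σ : ℝ} (i₀ : Fin k) (hw : ∀ i, 0 ≤ w i)
    (hμ : μ ∈ stdSimplex ℝ (Fin k)) (hσ : 0 ≤ σ) (hσw : σ * (1 + ∑ i, μ i * w i) ≤ 1) :
    ∃ ν ∈ stdSimplex ℝ (Fin k),
      ∑ i, ν i • (X i₀ + (1 + w i)⁻¹ • (X i - X i₀)) =
        X i₀ + σ • (∑ i, μ i • X i - X i₀) := by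
  set ν : Fin k → ℝ := fun i => σ * (μ i * (1 + w i)) +
    (Pi.single i₀ (1 - σ * (1 + ∑ i, μ i * w i)) : Fin k → ℝ) i with hν
  have hsum : ∑ i, ν i = 1 := by
    simp only [hν, Finset.sum_add_distrib, ← Finset.mul_sum, mul_add, mul_one, hμ.2]
    simp
  refine ⟨ν, ⟨fun i => ?_, hsum⟩, ?_⟩
  · have h1 : 0 ≤ (Pi.single i₀ (1 - σ * (1 + ∑ i, μ i * w i)) : Fin k → ℝ) i := by
      rw [Pi.single_apply]; split_ifs <;> linarith
    have := mul_nonneg hσ (mul_nonneg (hμ.1 i) (by linarith [hw i] : 0 ≤ 1 + w i))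
    exact add_nonneg this h1
  · have hterm : ∀ i, ν i • (X i₀ + (1 + w i)⁻¹ • (X i - X i₀)) =
        ν i • X i₀ + σ • (μ i • X i - μ i • X i₀) := by
      intro i
      have hwi : (1 + w i) ≠ 0 := by linarith [hw i]
      rw [smul_add, smul_smul]
      congr 1
      by_cases hi : i = i₀
      · subst hi; simp
      · simp only [hν, Pi.single_apply, if_neg hi, add_zero]
        rw [show σ * (μ i * (1 + w i)) * (1 + w i)⁻¹ = σ * μ i by field_simp, mul_smul, smul_sub]
    simp only [hterm, Finset.sum_add_distrib, ← Finset.sum_smul, hsum, ← Finset.smul_sum,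
      Finset.sum_sub_distrib, hμ.2, one_smul]

/-- Points of the epigraph of `g` at bounded height, contracted towards the interior of the
epigraph, are in the epigraph of any `h` close to `g`. -/
lemma IsDominated.exp_le_of_contraction {n : ℕ} {z : Eucl n} {r c : ℝ} {D g h : Eucl n → ℝ}
    (hg : IsDominated z r c D g) (hh : IsLogConcave h) {ε U : ℝ}
    (hε : 0 < ε) (hε1 : ε < 1)
    (hvol : 2 * volume {w | Real.exp (-U) * (1 - Real.exp (-ε)) ≤ |g w - h w|} <
      volume (ball (0 : Eucl n) (ε * r))) {x : Eucl n} {t : ℝ} (hx : Real.exp (-t) ≤ g x)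
    (hU : (1 - ε) * t + ε * c ≤ U) :
    Real.exp (-((1 - ε) * t + ε * (c + 1))) ≤ h ((1 - ε) • x + ε • z) := by
  refine hh.exp_le_of_close (u := (1 - ε) * t + ε * c) (fun w hw => ?_) ?_ hvol
  · have hv : z + ε⁻¹ • (w - ((1 - ε) • x + ε • z)) ∈ ball z r := by
      rw [mem_ball, dist_eq_norm] at hw ⊢
      rw [add_sub_cancel_left, norm_smul, norm_inv, Real.norm_of_nonneg hε.le,
        inv_mul_lt_iff₀ hε]
      exact hw
    have := hg.concave x _ t c (1 - ε) ε (by linarith) hε.le (by ring) hx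
      (hg.exp_le_of_mem_ball _ hv)
    rwa [smul_add, smul_inv_smul₀ hε.ne', ← add_assoc, add_sub_cancel] at this
  · rw [show -((1 - ε) * t + ε * (c + 1)) = -((1 - ε) * t + ε * c) + -ε by ring, Real.exp_add]
    have h1 : Real.exp (-U) ≤ Real.exp (-((1 - ε) * t + ε * c)) :=
      Real.exp_le_exp.2 (by linarith)
    have h2 : Real.exp (-ε) ≤ 1 := Real.exp_le_one_iff.2 (by linarith)
    nlinarith

lemma exists_tail {n : ℕ} {D : Eucl n → ℝ} (hD : Integrable D) (hD0 : ∀ x, 0 ≤ D x) {δ : ℝ}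
    (hδ : 0 < δ) (T₀ : ℝ) : ∃ T, T₀ ≤ T ∧ ∫ x, min (D x) (Real.exp (-T)) ≤ δ := by
  have hlim : Tendsto (fun k : ℕ => ∫ x, min (D x) (Real.exp (-(k : ℝ)))) atTop
      (nhds (∫ _ : Eucl n, (0 : ℝ))) := by
    refine tendsto_integral_of_dominated_convergence D
      (fun k => hD.aestronglyMeasurable.inf aestronglyMeasurable_const) hD
      (fun k => Eventually.of_forall fun x => ?_) (Eventually.of_forall fun x => ?_)
    · rw [Real.norm_of_nonneg (le_min (hD0 x) (Real.exp_pos _).le)]; exact min_le_left _ _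
    · have : Tendsto (fun k : ℕ => Real.exp (-(k : ℝ))) atTop (nhds 0) :=
        Real.tendsto_exp_neg_atTop_nhds_zero.comp tendsto_natCast_atTop_atTop
      simpa [min_eq_right (hD0 x)] using (tendsto_const_nhds (x := D x)).min this
  rw [integral_zero] at hlim
  obtain ⟨k, h1, h2⟩ := ((hlim.eventually (gt_mem_nhds hδ)).and
    (tendsto_natCast_atTop_atTop.eventually_ge_atTop T₀)).exists
  exact ⟨k, h2, h1.le⟩

/-- Log affine minorants of `g` are approximated by log affine minorants of `h` close to `g`. -/
lemma exists_mem_PN_approx {n N : ℕ} (hN : 1 ≤ N) {z : Eucl n} {r c B : ℝ} {D : Eucl n → ℝ}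
    (hr : 0 < r) (hD : Integrable D) (hD0 : ∀ x, 0 ≤ D x) (hDB : ∀ x, D x ≤ Real.exp B)
    {δ : ℝ} (hδ : 0 < δ) : ∃ η > 0, ∃ ρ > 0, ∀ g h, IsDominated z r c D g →
      IsDominated z r c D h → 2 * volume {w | η ≤ |g w - h w|} < volume (ball (0 : Eucl n) ρ) →
      ∀ q ∈ PN N g, ∃ q' ∈ PN N h, totalMass q - δ ≤ totalMass q' := by
  obtain ⟨T, hT, htail⟩ := exists_tail hD hD0 (show 0 < δ / 4 by positivity) (|B| + 1)
  have hT0 : 0 ≤ T := by linarith [abs_nonneg B]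
  have hTB : 1 ≤ T + B := by linarith [neg_abs_le B]
  set I := ∫ x, D x with hI
  have hI0 : 0 ≤ I := integral_nonneg hD0
  obtain ⟨ε, hε, hε1, hfac⟩ : ∃ ε > 0, ε < 1 ∧ 1 - δ / (2 * (I + 1)) ≤
      ((1 - ε) ^ 2) ^ n * Real.exp (-(B * (1 - (1 - ε) ^ 2) + ε * (T + |c| + 1))) := by
    have hcont : Tendsto (fun ε : ℝ => ((1 - ε) ^ 2) ^ n *
        Real.exp (-(B * (1 - (1 - ε) ^ 2) + ε * (T + |c| + 1)))) (nhdsWithin 0 (Ioi 0))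
        (nhds 1) := by
      have h : Continuous fun ε : ℝ => ((1 - ε) ^ 2) ^ n *
        Real.exp (-(B * (1 - (1 - ε) ^ 2) + ε * (T + |c| + 1))) := by fun_prop
      simpa using (h.tendsto 0).mono_left nhdsWithin_le_nhds
    have hlt : 1 - δ / (2 * (I + 1)) < 1 := sub_lt_self _ (by positivity)
    obtain ⟨ε, h1, h2⟩ := ((hcont.eventually (lt_mem_nhds hlt)).and
      (Ioo_mem_nhdsGT one_pos)).exists
    exact ⟨ε, h2.1, h2.2, h1.le⟩
  set R := (T + B) * (1 - ε) / ε with hR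
  have h1ε : 0 < 1 - ε := by linarith
  have hR0 : 0 < R := by positivity
  set U := T + R + |c| with hU
  refine ⟨Real.exp (-U) * (1 - Real.exp (-ε)), mul_pos (Real.exp_pos _) (sub_pos.2 ?_), ε * r,
    by positivity, ?_⟩
  · rw [Real.exp_lt_one_iff]
    linarith
  intro g h hg hh hvol q hq
  obtain ⟨k, hk, hkN, x, t, hxt, hqh⟩ := exists_isHull_of_mem_PN hq
  have hqg : ∀ y, q y ≤ g y := hqh.le hg.toIsLogConcave hxt
  have hqD : ∀ y, q y ≤ D y := fun y => (hqg y).trans (hg.le_dom y)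
  have hqint : Integrable q := (hg.integrable hD).mono' hqh.measurable.aestronglyMeasurable
    (Eventually.of_forall fun y => by rw [Real.norm_of_nonneg (hqh.nonneg y)]; exact hqg y)
  have hnonempty : Nonempty (Fin k) := ⟨⟨0, hk⟩⟩
  obtain ⟨i₀, hi₀⟩ := Finite.exists_min t
  by_cases hbig : totalMass q ≤ δ / 4
  · obtain ⟨q', hq', hq'h⟩ := exists_isHull_mem_PN (g := h) le_rfl hN (fun _ : Fin 1 => z)
      (fun _ => c) (fun _ => hh.exp_le_of_mem_ball z (mem_ball_self hr))
    have : 0 ≤ totalMass q' := integral_nonneg hq'h.nonneg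
    exact ⟨q', hq', by linarith⟩
  have ht₀T : t i₀ ≤ T := by
    by_contra! hcon
    refine hbig (le_trans (integral_mono hqint ?_ fun y => ?_) htail)
    · exact hD.mono' (hD.aestronglyMeasurable.inf aestronglyMeasurable_const)
        (Eventually.of_forall fun x => by
          rw [Real.norm_of_nonneg (le_min (hD0 x) (Real.exp_pos _).le)]; exact min_le_left _ _)
    · refine le_min (hqD y) (le_of_exp_neg_le (Real.exp_pos _).le fun s hs => ?_)
      obtain ⟨μ, hμ, -, h2⟩ := (hqh.exp_le_iff y s).1 hs
      have : ∑ j, μ j * t i₀ ≤ ∑ j, μ j * t j :=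
        Finset.sum_le_sum fun j _ => mul_le_mul_of_nonneg_left (hi₀ j) (hμ.1 j)
      rw [← Finset.sum_mul, hμ.2] at this
      exact Real.exp_le_exp.2 (by linarith)
  have ht₀B : -B ≤ t i₀ := by
    have := (hxt i₀).trans ((hg.le_dom _).trans (hDB _))
    rw [Real.exp_le_exp] at this; linarith
  set w : Fin k → ℝ := fun i => (t i - t i₀) / R with hw
  have hw0 : ∀ i, 0 ≤ w i := fun i => div_nonneg (sub_nonneg.2 (hi₀ i)) hR0.le
  set X : Fin k → Eucl n × ℝ := fun i => (x i, t i) with hX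
  set Y : Fin k → Eucl n × ℝ := fun i => X i₀ + (1 + w i)⁻¹ • (X i - X i₀) with hY
  have hYg : ∀ i, Real.exp (-(Y i).2) ≤ g (Y i).1 := by
    intro i
    have h1 : (1 + w i)⁻¹ ≤ 1 := inv_le_one_of_one_le₀ (by linarith [hw0 i])
    have h2 : 0 ≤ (1 + w i)⁻¹ := inv_nonneg.2 (by linarith [hw0 i])
    have := hg.concave (x i₀) (x i) (t i₀) (t i) (1 - (1 + w i)⁻¹) (1 + w i)⁻¹ (by linarith) h2
      (by ring) (hxt i₀) (hxt i)
    convert this using 2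
    · simp [hY, hX]; ring
    · simp only [hY, hX, Prod.fst_add, Prod.smul_fst, Prod.fst_sub]; module
  have hYt : ∀ i, (Y i).2 ≤ T + R := by
    intro i
    have h3 : (1 + w i)⁻¹ * (t i - t i₀) ≤ R := by
      have : t i - t i₀ = w i * R := by rw [hw]; field_simp
      rw [this, inv_mul_le_iff₀ (by linarith [hw0 i])]
      nlinarith
    have : (Y i).2 = t i₀ + (1 + w i)⁻¹ * (t i - t i₀) := by simp [hY, hX]
    linarith
  have hZ : ∀ i, Real.exp (-((1 - ε) * (Y i).2 + ε * (c + 1))) ≤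
      h ((1 - ε) • (Y i).1 + ε • z) := by
    intro i
    refine hg.exp_le_of_contraction hh.toIsLogConcave hε hε1 hvol (hYg i) ?_
    have h1 : (1 - ε) * (Y i).2 ≤ (1 - ε) * (T + R) := by gcongr; exact hYt i
    nlinarith [abs_nonneg c, le_abs_self c]
  obtain ⟨q', hq', hq'h⟩ := exists_isHull_mem_PN (N := N) (g := h) hk hkN
    (fun i => (1 - ε) • (Y i).1 + ε • z) (fun i => (1 - ε) * (Y i).2 + ε * (c + 1)) hZ
  have hq'g : ∀ y, q' y ≤ h y := hq'h.le hh.toIsLogConcave hZ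
  have hq'int : Integrable q' := (hh.integrable hD).mono' hq'h.measurable.aestronglyMeasurable
    (Eventually.of_forall fun y => by rw [Real.norm_of_nonneg (hq'h.nonneg y)]; exact hq'g y)
  set τ := (1 - ε) * (ε * t i₀) + ε * (c + 1) with hτ
  have hτ' : τ ≤ ε * (T + |c| + 1) := by
    have h1 : (1 - ε) * (ε * t i₀) ≤ (1 - ε) * (ε * T) := by gcongr
    nlinarith [mul_nonneg hε.le (mul_nonneg hε.le hT0), mul_le_mul_of_nonneg_left
      (le_abs_self c) hε.le]
  have hmain := integral_le_of_contraction (θ := (1 - ε) ^ 2) (τ := τ) (T := T)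
    (v := (1 - ε) • (ε • x i₀) + ε • z)
    hD hD0 hDB hqint hqD hq'int hq'h.nonneg (by positivity) (by nlinarith) (by
      intro y s hs hys
      obtain ⟨μ, hμ, h1, h2⟩ := (hqh.exp_le_iff y s).1 hys
      have hwsum : ∑ i, μ i * w i = (∑ i, μ i * t i - t i₀) / R := by
        rw [hw]
        simp only [← mul_div_assoc, ← Finset.sum_div, mul_sub, Finset.sum_sub_distrib,
          ← Finset.sum_mul, hμ.2, one_mul]
      have hσ : (1 - ε) * (1 + ∑ i, μ i * w i) ≤ 1 := by
        have h3 : ∑ i, μ i * w i ≤ (T + B) / R := by rw [hwsum]; gcongr; linarith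
        have h4 : (1 - ε) * ((T + B) / R) = ε := by rw [hR]; field_simp
        nlinarith
      obtain ⟨ν, hν, hνsum⟩ := exists_stdSimplex_contraction (X := X) i₀ hw0 hμ h1ε.le hσ
      have hfst := congrArg Prod.fst hνsum
      have hsnd := congrArg Prod.snd hνsum
      simp only [Prod.fst_sum, Prod.snd_sum, Prod.smul_fst, Prod.smul_snd, Prod.fst_add,
        Prod.snd_add, Prod.fst_sub, Prod.snd_sub, hX, smul_eq_mul] at hfst hsnd
      refine (hq'h.exp_le_iff _ _).2 ⟨ν, hν, ?_, ?_⟩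
      · simp only [smul_add, smul_comm _ (1 - ε), Finset.sum_add_distrib, ← Finset.smul_sum,
          ← Finset.sum_smul, hν.2, one_smul, hY, hX, Prod.fst_add, Prod.smul_fst, Prod.fst_sub]
          at hfst ⊢
        rw [← smul_add, hfst, h1]
        module
      · have : ∑ i, ν i * ((1 - ε) * (Y i).2 + ε * (c + 1)) =
            (1 - ε) * ∑ i, ν i * (t i₀ + (1 + w i)⁻¹ * (t i - t i₀)) + ε * (c + 1) := by
          have hconst : ∑ i, ν i * (ε * (c + 1)) = ε * (c + 1) := by
            rw [← Finset.sum_mul, hν.2, one_mul]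
          conv_rhs => rw [← hconst, Finset.mul_sum, ← Finset.sum_add_distrib]
          refine Finset.sum_congr rfl fun i _ => ?_
          simp only [hY, hX, Prod.snd_add, Prod.smul_snd, Prod.snd_sub, smul_eq_mul]
          ring
        rw [this, hsnd, hτ]
        have h5 : (1 - ε) ^ 2 * ∑ i, μ i * t i ≤ (1 - ε) ^ 2 * s := by gcongr
        linarith)
  refine ⟨q', hq', le_trans ?_ hmain⟩
  have hJ : totalMass q ≤ I := integral_mono hqint hD hqD
  set m := ∫ x, min (D x) (Real.exp (-T)) with hm
  have hm0 : 0 ≤ m := integral_nonneg fun x => le_min (hD0 x) (Real.exp_pos _).le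
  have hpos : 0 ≤ totalMass q - m := by linarith
  have hfac' : 1 - δ / (2 * (I + 1)) ≤
      ((1 - ε) ^ 2) ^ n * Real.exp (-(B * (1 - (1 - ε) ^ 2) + τ)) := by
    refine hfac.trans ?_
    gcongr
  have h1 := mul_le_mul_of_nonneg_right hfac' hpos
  have h2 : δ / (2 * (I + 1)) * (totalMass q - m) ≤ δ / 2 := by
    rw [div_mul_eq_mul_div, div_le_div_iff₀ (by positivity) two_pos]
    nlinarith
  refine le_trans ?_ h1
  linarith

lemma Gfun_le_add {n N : ℕ} (hN : 1 ≤ N) {g h : Eucl n → ℝ} {δ : ℝ} {z : Eucl n}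
    (hz : 0 < g z) (hh : IsLogConcave h) (hint : Integrable h)
    (happ : ∀ q ∈ PN N g, ∃ q' ∈ PN N h, totalMass q - δ ≤ totalMass q') :
    Gfun N h ≤ Gfun N g + (totalMass h - totalMass g) + δ := by
  have hbdd : BddBelow {d : ℝ | ∃ q ∈ PN N h, d = totalMass h - totalMass q} := by
    refine ⟨0, ?_⟩
    rintro d ⟨q, hq, rfl⟩
    obtain ⟨k, -, -, x, t, hxt, hqh⟩ := exists_isHull_of_mem_PN hq
    have hqg := hqh.le hh hxt
    exact sub_nonneg.2 (integral_mono_of_nonneg (Eventually.of_forall hqh.nonneg) hint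
      (Eventually.of_forall hqg))
  have hne : {d : ℝ | ∃ q ∈ PN N g, d = totalMass g - totalMass q}.Nonempty := by
    obtain ⟨q, hq, -⟩ := exists_isHull_mem_PN (g := g) le_rfl hN (fun _ : Fin 1 => z)
      (fun _ => -Real.log (g z)) (fun _ => by rw [neg_neg, Real.exp_log hz])
    exact ⟨_, q, hq, rfl⟩
  have : Gfun N h - (totalMass h - totalMass g) - δ ≤ Gfun N g := by
    refine le_csInf hne ?_
    rintro d ⟨q, hq, rfl⟩
    obtain ⟨q', hq', hle⟩ := happ q hq
    have : Gfun N h ≤ totalMass h - totalMass q' := csInf_le hbdd ⟨q', hq', rfl⟩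
    linarith
  linarith

/-- The functional `G_{n,N}` is continuous on `LC_c(ℝⁿ)` with respect to the
`L^p` metric: if `f, f₁, f₂, … ∈ LC_c(ℝⁿ)` and `‖f_m − f‖_p → 0`, then
`G_{n,N}(f_m) → G_{n,N}(f)`. -/
theorem Gfun_continuous_Lp
    (n N : ℕ) (hn : 1 ≤ n) (hN : n + 2 ≤ N) (p : ℝ) (hp : 1 ≤ p)
    (f : Eucl n → ℝ) (F : ℕ → Eucl n → ℝ)
    (hf : MemLCc f) (hF : ∀ m, MemLCc (F m))
    (hconv : Tendsto (fun m => eLpNorm (fun x => F m x - f x) (ENNReal.ofReal p) volume)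
      atTop (nhds 0)) :
    Tendsto (fun m => Gfun N (F m)) atTop (nhds (Gfun N f)) := by
  have hflc := hf.isLogConcave
  have hFlc := fun m => (hF m).isLogConcave
  have hmeas : TendstoInMeasure volume F atTop f :=
    tendstoInMeasure_of_tendsto_eLpNorm (by simpa using one_pos.trans_le hp)
      (fun m => (hFlc m).measurable.aestronglyMeasurable) hflc.measurable.aestronglyMeasurable
      hconv
  have hclose : ∀ η > 0, ∀ ρ > 0, ∀ᶠ m in atTop,
      2 * volume {w | η ≤ |f w - F m w|} < volume (ball (0 : Eucl n) ρ) := by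
    intro η hη ρ hρ
    have h1 := tendstoInMeasure_iff_norm.1 hmeas η hη
    have h2 := ENNReal.Tendsto.const_mul (a := 2) h1 (Or.inr (by simp))
    rw [mul_zero] at h2
    filter_upwards [h2.eventually (gt_mem_nhds (measure_ball_pos volume (0 : Eucl n) hρ))]
      with m hm
    simpa only [Real.norm_eq_abs, abs_sub_comm] using hm
  obtain ⟨z, r, c, B, D, η₀, ρ₀, hr, hη₀, hρ₀, hD, hD0, hDB, hdom⟩ := hf.exists_isDominated
  have hfdom : IsDominated z r c D f := by
    refine hdom f hflc ?_
    simpa [hη₀.not_ge] using measure_ball_pos volume (0 : Eucl n) hρ₀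
  have hFdom : ∀ᶠ m in atTop, IsDominated z r c D (F m) :=
    (hclose η₀ hη₀ ρ₀ hρ₀).mono fun m hm => hdom _ (hFlc m) hm
  have hmass : Tendsto (fun m => totalMass (F m)) atTop (nhds (totalMass f)) := by
    refine tendsto_of_subseq_tendsto fun ns hns => ?_
    obtain ⟨ms, hms, hae⟩ := (hmeas.comp hns).exists_seq_tendsto_ae
    refine ⟨ms, tendsto_integral_filter_of_dominated_convergence D ?_ ?_ hD hae⟩
    · exact Eventually.of_forall fun m => (hFlc _).measurable.aestronglyMeasurable
    · filter_upwards [(hns.comp hms.tendsto_atTop).eventually hFdom] with m hm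
      refine Eventually.of_forall fun x => ?_
      exact (Real.norm_of_nonneg (hm.nonneg x)).trans_le (hm.le_dom x)
  have hzpos : ∀ g, IsDominated z r c D g → 0 < g z := fun g hg =>
    (Real.exp_pos _).trans_le (hg.exp_le_of_mem_ball z (mem_ball_self hr))
  have hN1 : 1 ≤ N := by omega
  refine Metric.tendsto_atTop'.2 fun δ hδ => ?_
  obtain ⟨η, hη, ρ, hρ, happ⟩ := exists_mem_PN_approx (c := c) hN1 hr hD hD0 hDB
    (show 0 < δ / 2 by positivity)
  have hev : ∀ᶠ m in atTop, dist (Gfun N (F m)) (Gfun N f) < δ := by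
    filter_upwards [hFdom, hclose η hη ρ hρ,
      hmass.eventually (ball_mem_nhds _ (show 0 < δ / 2 by positivity))] with m hm hvol hJ
    have h1 := Gfun_le_add hN1 (hzpos _ hfdom) (hFlc m) (hm.integrable hD)
      (happ f (F m) hfdom hm hvol)
    have h2 := Gfun_le_add hN1 (hzpos _ hm) hflc (hfdom.integrable hD)
      (happ (F m) f hm hfdom (by simpa only [abs_sub_comm] using hvol))
    rw [Real.dist_eq, abs_lt] at hJ ⊢
    constructor <;> linarith [hJ.1, hJ.2]
  obtain ⟨m₀, hm₀⟩ := eventually_atTop.1 hev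
  exact ⟨m₀, fun m hm => hm₀ m hm.le⟩
end
end

section
/- (Macbeath's inequality.) Fix integers n ≥ 1 and N ≥ n+2. For every convex body K ⊂ ℝⁿ, min over polytopes P ⊆ K with at most N vertices of vol_n(K \ P) is at most min over polytopes Q ⊆ K* with at most N vertices of vol_n(K* \ Q), where K* is the closed Euclidean ball centered at the origin with vol_n(K*) = vol_n(K). -/
open MeasureTheory Filter Set Metric

noncomputable section

/-- `𝒞_N^in(K)`: polytopes with at most `N` vertices contained in `K`. -/
def PolyIn {n : ℕ} (N : ℕ) (K : Set (Eucl n)) : Set (Set (Eucl n)) :=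
  {P : Set (Eucl n) |
    (∃ S : Finset (Eucl n), S.card ≤ N ∧ P = convexHull ℝ (S : Set (Eucl n))) ∧ P ⊆ K}

section Fibers

variable {E : Type*} [NormedAddCommGroup E] [InnerProductSpace ℝ E]

/-- The set of parameters `t` for which the point `y + t u` of a line lies in `S`. -/
def lineFiber (u y : E) (S : Set E) : Set ℝ := {t : ℝ | y + t • u ∈ S}

lemma isCompact_lineFiber {u : E} (hu : ‖u‖ = 1) (y : E) {S : Set E} (hS : IsCompact S) :
    IsCompact (lineFiber u y S) := by
  obtain ⟨R, hR⟩ := hS.isBounded.exists_norm_le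
  refine Metric.isCompact_of_isClosed_isBounded
    (hS.isClosed.preimage (by fun_prop : Continuous fun t : ℝ => y + t • u)) ?_
  refine (Metric.isBounded_closedBall (x := (0 : ℝ)) (r := R + ‖y‖)).subset fun t ht => ?_
  have h1 : ‖t • u‖ ≤ ‖y + t • u‖ + ‖y‖ := by
    simpa using norm_sub_le (y + t • u) y
  rw [norm_smul, hu, mul_one] at h1
  rw [mem_closedBall, dist_zero_right]
  linarith [hR _ ht]

lemma exists_volume_le_of_isCompact {F : Set ℝ} (hF : IsCompact F) (hne : F.Nonempty) :
    ∃ a ∈ F, ∃ b ∈ F, volume F ≤ ENNReal.ofReal (a - b) := by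
  refine ⟨sSup F, hF.sSup_mem hne, sInf F, hF.sInf_mem hne, ?_⟩
  rw [← Real.volume_Icc]
  exact measure_mono fun t ht => ⟨csInf_le hF.bddBelow ht, le_csSup hF.bddAbove ht⟩

lemma ofReal_sub_le_volume_lineFiber {u y : E} {S : Set E} (hS : Convex ℝ S) {a b : ℝ}
    (ha : y + a • u ∈ S) (hb : y + b • u ∈ S) :
    ENNReal.ofReal (a - b) ≤ volume (lineFiber u y S) := by
  have hconv : Convex ℝ (lineFiber u y S) := by
    intro s hs t ht c d hc hd hcd
    have h := hS hs ht hc hd hcd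
    have : c • (y + s • u) + d • (y + t • u) = y + (c • s + d • t) • u := by
      calc _ = (c + d) • y + (c • s + d • t) • u := by
            simp only [smul_eq_mul]; module
        _ = _ := by rw [hcd, one_smul]
    rwa [this] at h
  rw [← Real.volume_Icc]
  exact measure_mono (hconv.ordConnected.out hb ha)

variable [FiniteDimensional ℝ E] [MeasurableSpace E] [BorelSpace E]

/-- Cavalieri's principle for lines in direction `u`, the transversal measure being normalized
up to a constant. -/
lemma exists_volume_eq_lintegral_lineFiber {u : E} (hu : ‖u‖ = 1) :
    ∃ c : ENNReal, ∀ S : Set E, MeasurableSet S →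
      (Measurable fun y : (ℝ ∙ u)ᗮ => volume (lineFiber u (y : E) S)) ∧
      volume S = c * ∫⁻ y : (ℝ ∙ u)ᗮ, volume (lineFiber u (y : E) S) := by
  let W := (ℝ ∙ u)ᗮ
  let φ : (W × ℝ) →ₗ[ℝ] E := W.subtype.coprod (LinearMap.toSpanSingleton ℝ E u)
  have hφ : ∀ p, φ p = (p.1 : E) + p.2 • u := fun p => by simp [φ]
  have huu : inner ℝ u u = 1 := by rw [real_inner_self_eq_norm_sq, hu]; norm_num
  have hbij : Function.Bijective φ := by
    constructor
    · rw [← LinearMap.ker_eq_bot, LinearMap.ker_eq_bot']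
      rintro ⟨y, t⟩ h
      rw [hφ] at h
      have hy := Submodule.mem_orthogonal_singleton_iff_inner_right.1 y.2
      have ht : t = 0 := by
        have := congrArg (fun z => inner ℝ u z) h
        rwa [inner_add_right, inner_smul_right, huu, hy, inner_zero_right, zero_add, mul_one] at this
      subst ht
      simpa using h
    · intro x
      refine ⟨(⟨x - (inner ℝ u x) • u, ?_⟩, inner ℝ u x), ?_⟩
      · rw [Submodule.mem_orthogonal_singleton_iff_inner_right]
        rw [inner_sub_right, inner_smul_right, huu, mul_one, sub_self]
      · simp [hφ]
  let Φ : (W × ℝ) ≃L[ℝ] E := (LinearEquiv.ofBijective φ hbij).toContinuousLinearEquiv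
  have hΦ : ∀ p, Φ p = (p.1 : E) + p.2 • u := hφ
  let μ : Measure (W × ℝ) := (volume : Measure W).prod volume
  have : (μ.map Φ).IsAddHaarMeasure := Φ.isAddHaarMeasure_map μ
  have hc := Measure.isAddLeftInvariant_eq_smul (volume : Measure E) (μ.map Φ)
  refine ⟨Measure.addHaarScalarFactor (volume : Measure E) (μ.map Φ), fun S hS => ?_⟩
  have hmeas : MeasurableSet (Φ ⁻¹' S) := Φ.continuous.measurable hS
  have hfib : ∀ y : W, Prod.mk y ⁻¹' (Φ ⁻¹' S) = lineFiber u (y : E) S := fun y => by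
    ext t; simp [hΦ, lineFiber]
  constructor
  · have := measurable_measure_prodMk_left (ν := (volume : Measure ℝ)) hmeas
    simpa only [hfib] using this
  · rw [congrArg (fun ν : Measure E => ν S) hc, Measure.smul_apply, Measure.map_apply Φ.continuous.measurable hS,
      Measure.prod_apply hmeas, ENNReal.smul_def, smul_eq_mul]
    simp only [hfib]
    rfl

lemma volume_add_le_of_lineFiber {u : E} (hu : ‖u‖ = 1) {S₁ S₂ T₁ T₂ : Set E}
    (hS₁ : MeasurableSet S₁) (hS₂ : MeasurableSet S₂)
    (hT₁ : MeasurableSet T₁) (hT₂ : MeasurableSet T₂)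
    (h : ∀ y : E, inner ℝ u y = 0 →
      volume (lineFiber u y S₁) + volume (lineFiber u y S₂) ≤
        volume (lineFiber u y T₁) + volume (lineFiber u y T₂)) :
    volume S₁ + volume S₂ ≤ volume T₁ + volume T₂ := by
  obtain ⟨c, hc⟩ := exists_volume_eq_lintegral_lineFiber hu
  rw [(hc _ hS₁).2, (hc _ hS₂).2, (hc _ hT₁).2, (hc _ hT₂).2, ← mul_add, ← mul_add,
    ← lintegral_add_left (hc _ hS₁).1, ← lintegral_add_left (hc _ hT₁).1]
  refine mul_le_mul_right (lintegral_mono fun y => ?_) c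
  exact h y (Submodule.mem_orthogonal_singleton_iff_inner_right.1 y.2)

end Fibers

section Steiner

variable {E : Type*} [NormedAddCommGroup E] [InnerProductSpace ℝ E]

/-- The Steiner symmetral of a convex set `L` with respect to the hyperplane `u^⊥`. -/
def steiner (u : E) (L : Set E) : Set E :=
  {x : E | ∃ α β : ℝ, x + α • u ∈ L ∧ x + β • u ∈ L ∧ 2 * |inner ℝ u x| ≤ α - β}

lemma add_smul_mem_steiner {u : E} (hu : ‖u‖ = 1) {L : Set E} {y : E} (hy : inner ℝ u y = 0)
    {a b t : ℝ} (ha : y + a • u ∈ L) (hb : y + b • u ∈ L) (ht : 2 * |t| ≤ a - b) :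
    y + t • u ∈ steiner u L := by
  refine ⟨a - t, b - t, ?_, ?_, ?_⟩
  · convert ha using 1; module
  · convert hb using 1; module
  · rw [inner_add_right, inner_smul_right, real_inner_self_eq_norm_sq, hu, hy]
    simpa using ht

lemma convex_steiner (u : E) {L : Set E} (hL : Convex ℝ L) : Convex ℝ (steiner u L) := by
  rintro x ⟨α, β, hα, hβ, hx⟩ x' ⟨α', β', hα', hβ', hx'⟩ c d hc hd hcd
  refine ⟨c * α + d * α', c * β + d * β', ?_, ?_, ?_⟩
  · convert hL hα hα' hc hd hcd using 1; module
  · convert hL hβ hβ' hc hd hcd using 1; module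
  · rw [inner_add_right, inner_smul_right, inner_smul_right]
    have h1 := abs_add_le (c * inner ℝ u x) (d * inner ℝ u x')
    rw [abs_mul, abs_mul, abs_of_nonneg hc, abs_of_nonneg hd] at h1
    nlinarith [mul_le_mul_of_nonneg_left hx hc, mul_le_mul_of_nonneg_left hx' hd]

lemma steiner_subset_closedBall {u : E} (hu : ‖u‖ = 1) {L : Set E} {R : ℝ}
    (hL : L ⊆ closedBall 0 R) : steiner u L ⊆ closedBall 0 R := by
  rintro x ⟨α, β, hα, hβ, hx⟩
  have key : ∀ s : ℝ, x + s • u ∈ L → ‖x‖ ^ 2 + 2 * s * inner ℝ u x + s ^ 2 ≤ R ^ 2 := by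
    intro s hs
    have h := hL hs
    rw [mem_closedBall, dist_zero_right] at h
    have h2 := pow_le_pow_left₀ (norm_nonneg _) h 2
    rw [norm_add_sq_real, inner_smul_right, norm_smul, hu, real_inner_comm] at h2
    simp only [mul_one, Real.norm_eq_abs, sq_abs] at h2
    linarith
  have h0 : 0 ≤ R := by
    have h := hL hα
    rw [mem_closedBall] at h
    exact dist_nonneg.trans h
  rw [mem_closedBall, dist_zero_right]
  refine abs_le_of_sq_le_sq' ?_ h0 |>.2
  have h1 := key α hα
  have h2 := key β hβ
  set t : ℝ := inner ℝ u x
  have ha := le_abs_self t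
  have hb := neg_abs_le t
  have : 0 ≤ α ^ 2 + 2 * α * t ∨ 0 ≤ β ^ 2 + 2 * β * t := by
    by_contra! hcon
    obtain ⟨h3, h4⟩ := hcon
    have h5 := abs_lt_of_sq_lt_sq (a := α + t) (b := |t|)
      (by rw [sq_abs]; linarith [h3]) (abs_nonneg t)
    have h6 := abs_lt_of_sq_lt_sq (a := β + t) (b := |t|)
      (by rw [sq_abs]; linarith [h4]) (abs_nonneg t)
    rw [abs_lt] at h5 h6
    linarith
  rcases this with h | h <;> linarith

lemma isCompact_steiner [FiniteDimensional ℝ E] {u : E} (hu : ‖u‖ = 1) {L : Set E}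
    (hL : IsCompact L) : IsCompact (steiner u L) := by
  obtain ⟨R, hR⟩ := hL.isBounded.subset_closedBall (0 : E)
  have hsub := steiner_subset_closedBall hu hR
  let C : Set (E × ℝ × ℝ) := {p | p.1 + p.2.1 • u ∈ L ∧ p.1 + p.2.2 • u ∈ L ∧
    2 * |inner ℝ u p.1| ≤ p.2.1 - p.2.2}
  have hC : IsClosed C :=
    (hL.isClosed.preimage (by fun_prop : Continuous fun p : E × ℝ × ℝ => p.1 + p.2.1 • u)).inter
      ((hL.isClosed.preimage
        (by fun_prop : Continuous fun p : E × ℝ × ℝ => p.1 + p.2.2 • u)).inter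
        (isClosed_le
          (by fun_prop : Continuous fun p : E × ℝ × ℝ => 2 * |inner ℝ u p.1|)
          (by fun_prop : Continuous fun p : E × ℝ × ℝ => p.2.1 - p.2.2)))
  have hbox : IsCompact (closedBall (0 : E) R ×ˢ
      (Icc (-(2 * R)) (2 * R) ×ˢ Icc (-(2 * R)) (2 * R))) :=
    (isCompact_closedBall _ _).prod (isCompact_Icc.prod isCompact_Icc)
  have bound : ∀ x ∈ steiner u L, ∀ s : ℝ, x + s • u ∈ L → s ∈ Icc (-(2 * R)) (2 * R) := by
    intro x hx s hs
    have h1 := hsub hx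
    have h2 := hR hs
    rw [mem_closedBall, dist_zero_right] at h1 h2
    have h3 : ‖s • u‖ ≤ ‖x + s • u‖ + ‖x‖ := by simpa using norm_sub_le (x + s • u) x
    rw [norm_smul, hu, mul_one, Real.norm_eq_abs] at h3
    exact abs_le.1 (by linarith)
  convert (hbox.inter_right hC).image continuous_fst using 1
  ext x
  constructor
  · intro hx
    obtain ⟨α, β, hα, hβ, h⟩ := id hx
    exact ⟨(x, α, β), ⟨⟨hsub hx, bound x hx α hα, bound x hx β hβ⟩, hα, hβ, h⟩, rfl⟩
  · rintro ⟨⟨x, α, β⟩, ⟨-, hα, hβ, h⟩, rfl⟩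
    exact ⟨α, β, hα, hβ, h⟩

lemma exists_shift_of_mem_steiner {u : E} {L : Set E} (hL : Convex ℝ L) {x : E}
    (hx : x ∈ steiner u L) :
    ∃ m : ℝ, x + m • u ∈ L ∧ x + (m - 2 * inner ℝ u x) • u ∈ L := by
  obtain ⟨α, β, hα, hβ, h⟩ := hx
  have hmem : ∀ s : ℝ, β ≤ s → s ≤ α → x + s • u ∈ L := by
    intro s hs hs'
    have hconv : Convex ℝ ((AffineMap.lineMap x (x + u) : ℝ →ᵃ[ℝ] E) ⁻¹' L) :=
      hL.affine_preimage _
    have := hconv.ordConnected.out (x := β) (y := α)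
      (by simpa [AffineMap.lineMap_apply, add_comm] using hβ)
      (by simpa [AffineMap.lineMap_apply, add_comm] using hα) ⟨hs, hs'⟩
    simpa [AffineMap.lineMap_apply, add_comm] using this
  have ha := le_abs_self (inner ℝ u x : ℝ)
  have hb := neg_abs_le (inner ℝ u x : ℝ)
  exact ⟨inner ℝ u x + (α + β) / 2, hmem _ (by linarith) (by linarith),
    hmem _ (by linarith) (by linarith)⟩

lemma min_volume_lineFiber_le {u : E} (hu : ‖u‖ = 1) {L : Set E} (hL : IsCompact L) {r : ℝ}
    {y : E} (hy : inner ℝ u y = 0) :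
    min (volume (lineFiber u y L)) (volume (lineFiber u y (closedBall 0 r))) ≤
      volume (lineFiber u y (steiner u L ∩ closedBall 0 r)) := by
  rcases (lineFiber u y L).eq_empty_or_nonempty with he | hne
  · simp [he]
  obtain ⟨a, ha, b, hb, hab⟩ := exists_volume_le_of_isCompact (isCompact_lineFiber hu y hL) hne
  have hball : ∀ t : ℝ, y + t • u ∈ closedBall (0 : E) r ↔
      0 ≤ r ∧ t ^ 2 ≤ r ^ 2 - ‖y‖ ^ 2 := by
    intro t
    have hn : ‖y + t • u‖ ^ 2 = ‖y‖ ^ 2 + t ^ 2 := by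
      rw [norm_add_sq_real, inner_smul_right, norm_smul, hu, real_inner_comm, hy]
      simp
    rw [mem_closedBall, dist_zero_right]
    constructor
    · intro h
      have h0 := (norm_nonneg _).trans h
      exact ⟨h0, by linarith [pow_le_pow_left₀ (norm_nonneg _) h 2]⟩
    · rintro ⟨h0, h⟩
      exact (abs_le_of_sq_le_sq' (by linarith) h0).2
  have hsq : ∀ t : ℝ, t ∈ lineFiber u y (closedBall 0 r) →
      |t| ≤ √(r ^ 2 - ‖y‖ ^ 2) := fun t ht => Real.abs_le_sqrt ((hball t).1 ht).2
  set s : ℝ := √(r ^ 2 - ‖y‖ ^ 2)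
  rcases (lineFiber u y (closedBall 0 r)).eq_empty_or_nonempty with he | ⟨t₀, ht₀⟩
  · simp [he]
  have hr0 := ((hball t₀).1 ht₀).1
  have hs : s ^ 2 = r ^ 2 - ‖y‖ ^ 2 :=
    Real.sq_sqrt ((sq_nonneg t₀).trans ((hball t₀).1 ht₀).2)
  have hsub : Icc (-(min ((a - b) / 2) s)) (min ((a - b) / 2) s) ⊆
      lineFiber u y (steiner u L ∩ closedBall 0 r) := by
    intro t ht
    have hta := abs_le.2 ht
    refine ⟨add_smul_mem_steiner hu hy ha hb ?_, (hball t).2 ⟨hr0, ?_⟩⟩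
    · linarith [hta.trans (min_le_left _ _)]
    · rw [← hs, ← sq_abs t]
      exact pow_le_pow_left₀ (abs_nonneg t) (hta.trans (min_le_right _ _)) 2
  refine le_trans ?_ (measure_mono hsub)
  rw [Real.volume_Icc]
  rcases min_choice ((a - b) / 2) s with h | h <;> rw [h]
  · refine (min_le_left _ _).trans (hab.trans (le_of_eq ?_))
    congr 1; ring
  · refine (min_le_right _ _).trans ?_
    rw [← Real.volume_Icc]
    exact measure_mono fun t ht => abs_le.1 (hsq t ht)

variable [FiniteDimensional ℝ E] [MeasurableSpace E] [BorelSpace E]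

lemma volume_le_volume_steiner {u : E} (hu : ‖u‖ = 1) {L : Set E} (hL : IsCompact L) :
    volume L ≤ volume (steiner u L) := by
  have h := volume_add_le_of_lineFiber hu hL.measurableSet MeasurableSet.empty
    (isCompact_steiner hu hL).measurableSet MeasurableSet.empty fun y hy => ?_
  · simpa using h
  refine add_le_add_left ?_ _
  obtain ⟨R, hR⟩ := hL.isBounded.subset_closedBall (0 : E)
  have hle : volume (lineFiber u y L) ≤ volume (lineFiber u y (closedBall 0 R)) :=
    measure_mono fun t ht => hR ht
  have := min_volume_lineFiber_le hu hL (r := R) hy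
  rw [min_eq_left hle] at this
  exact this.trans (measure_mono fun t ht => ht.1)

/-- Steiner symmetrization improves the overlap with a centered ball by at least the measure of
the part of `L` outside the ball that some translation parallel to `u` carries into the part of
the ball outside `L`. -/
lemma volume_inter_add_le_volume_steiner_inter {u : E} (hu : ‖u‖ = 1) {L : Set E}
    (hL : IsCompact L) (r l : ℝ) :
    volume (L ∩ closedBall 0 r) +
        volume ((L \ closedBall 0 r) ∩ (fun x => x + l • u) ⁻¹' (closedBall 0 r \ L)) ≤
      volume (steiner u L ∩ closedBall 0 r) := by
  have hLm := hL.measurableSet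
  have hBm : MeasurableSet (closedBall (0 : E) r) := measurableSet_closedBall
  set A : Set E := (L \ closedBall 0 r) ∩ (fun x => x + l • u) ⁻¹' (closedBall 0 r \ L) with hA
  have hAm : MeasurableSet A :=
    (hLm.diff hBm).inter ((hBm.diff hLm).preimage (by fun_prop))
  have h := volume_add_le_of_lineFiber hu (hLm.inter hBm) hAm
    ((isCompact_steiner hu hL).measurableSet.inter hBm) MeasurableSet.empty fun y hy => ?_
  · simpa using h
  have hfm : ∀ {S : Set E}, MeasurableSet S → MeasurableSet (lineFiber u y S) := fun hS =>
    hS.preimage (by fun_prop : Measurable fun t : ℝ => y + t • u)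
  refine le_trans (le_min ?_ ?_) ((min_volume_lineFiber_le hu hL hy).trans le_self_add)
  · rw [← measure_union _ (hfm hAm)]
    · refine measure_mono ?_
      rintro t (ht | ht)
      exacts [ht.1, ht.1.1]
    · exact Set.disjoint_left.2 fun t ht ht' => ht'.1.2 ht.2
  · have htr : volume (lineFiber u y A) ≤ volume (lineFiber u y (closedBall 0 r \ L)) := by
      rw [← measure_preimage_add_right volume l (lineFiber u y (closedBall 0 r \ L))]
      refine measure_mono fun t ht => ?_
      have : y + t • u + l • u ∈ closedBall 0 r \ L := ht.2
      rwa [add_assoc, ← add_smul] at this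
    refine (add_le_add_right htr _).trans ?_
    rw [← measure_union _ (hfm (hBm.diff hLm))]
    · refine measure_mono ?_
      rintro t (ht | ht)
      exacts [ht.2, ht.1]
    · exact Set.disjoint_left.2 fun t ht ht' => ht'.2 ht.1

/-- Every polytope inscribed in the Steiner symmetral of `L` is matched in volume by a polytope
inscribed in `L` with no more vertices. -/
lemma exists_polytope_of_subset_steiner {u : E} (hu : ‖u‖ = 1) {L : Set E} (hL : Convex ℝ L)
    (S : Finset E) (hS : (S : Set E) ⊆ steiner u L) :
    ∃ T : Finset E, T.card ≤ S.card ∧ (T : Set E) ⊆ L ∧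
      volume (convexHull ℝ (S : Set E)) ≤ volume (convexHull ℝ (T : Set E)) := by
  classical
  have hex : ∀ x : E, ∃ m : ℝ, x ∈ S →
      x + m • u ∈ L ∧ x + (m - 2 * inner ℝ u x) • u ∈ L := by
    intro x
    by_cases hx : x ∈ S
    · obtain ⟨m, hm⟩ := exists_shift_of_mem_steiner hL (hS hx)
      exact ⟨m, fun _ => hm⟩
    · exact ⟨0, fun h => absurd h hx⟩
  choose m hm using hex
  let f : E → E := fun x => x + m x • u
  let g : E → E := fun x => x + (m x - 2 * inner ℝ u x) • u
  have hcomp : ∀ T : Finset E, IsCompact (convexHull ℝ (T : Set E)) := fun T =>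
    T.finite_toSet.isCompact_convexHull ℝ
  have key : ∀ z ∈ convexHull ℝ (S : Set E), ∃ M : ℝ,
      z + M • u ∈ convexHull ℝ (S.image f : Set E) ∧
      z + (M - 2 * inner ℝ u z) • u ∈ convexHull ℝ (S.image g : Set E) := by
    intro z hz
    obtain ⟨w, hw0, hw1, hwz⟩ := Finset.mem_convexHull'.1 hz
    have hmem : ∀ h : E → E, ∑ x ∈ S, w x • h x ∈ convexHull ℝ ((S.image h : Finset E) : Set E) :=
      fun h => (convex_convexHull ℝ _).sum_mem hw0 hw1 fun x hx =>
        subset_convexHull ℝ _ (by simpa using ⟨x, hx, rfl⟩)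
    refine ⟨∑ x ∈ S, w x * m x, ?_, ?_⟩
    · convert hmem f using 1
      simp only [f, smul_add, Finset.sum_add_distrib, hwz, smul_smul, Finset.sum_smul]
    · convert hmem g using 1
      simp only [g, smul_add, Finset.sum_add_distrib, hwz, smul_smul, ← Finset.sum_smul, mul_sub,
        Finset.sum_sub_distrib]
      congr 3
      rw [← hwz, inner_sum, Finset.mul_sum]
      refine Finset.sum_congr rfl fun x _ => ?_
      rw [inner_smul_right]; ring
  have hvol := volume_add_le_of_lineFiber hu (hcomp S).measurableSet (hcomp S).measurableSet
    (hcomp (S.image f)).measurableSet (hcomp (S.image g)).measurableSet fun y hy => ?_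
  · rcases le_total (volume (convexHull ℝ ((S.image g : Finset E) : Set E)))
      (volume (convexHull ℝ ((S.image f : Finset E) : Set E))) with h | h
    · refine ⟨S.image f, Finset.card_image_le, ?_, ?_⟩
      · intro z hz
        obtain ⟨x, hx, rfl⟩ := Finset.mem_image.1 hz
        exact (hm x hx).1
      · by_contra! hlt
        exact absurd hvol (not_le.2 (ENNReal.add_lt_add hlt (h.trans_lt hlt)))
    · refine ⟨S.image g, Finset.card_image_le, ?_, ?_⟩
      · intro z hz
        obtain ⟨x, hx, rfl⟩ := Finset.mem_image.1 hz
        exact (hm x hx).2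
      · by_contra! hlt
        exact absurd hvol (not_le.2 (ENNReal.add_lt_add (h.trans_lt hlt) hlt))
  · rcases (lineFiber u y (convexHull ℝ (S : Set E))).eq_empty_or_nonempty with he | hne
    · simp [he]
    obtain ⟨q, hq, p, hp, hqp⟩ :=
      exists_volume_le_of_isCompact (isCompact_lineFiber hu y (hcomp S)) hne
    have hin : ∀ t : ℝ, inner ℝ u (y + t • u) = t := fun t => by
      rw [inner_add_right, inner_smul_right, real_inner_self_eq_norm_sq, hu, hy]; simp
    obtain ⟨M, hM₁, hM₂⟩ := key _ hq
    obtain ⟨M', hM'₁, hM'₂⟩ := key _ hp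
    rw [hin] at hM₂ hM'₂
    rw [add_assoc, ← add_smul] at hM₁ hM₂ hM'₁ hM'₂
    have h₁ := ofReal_sub_le_volume_lineFiber (convex_convexHull ℝ _) hM₁ hM'₁
    have h₂ := ofReal_sub_le_volume_lineFiber (convex_convexHull ℝ _) hM'₂ hM₂
    refine le_trans ?_ (add_le_add h₁ h₂)
    refine le_trans ?_ ENNReal.ofReal_add_le
    have : q + M - (p + M') + (p + (M' - 2 * p) - (q + (M - 2 * q))) = (q - p) + (q - p) := by ring
    rw [this]
    rcases le_total 0 (q - p) with h | h
    · rw [ENNReal.ofReal_add h h]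
      exact add_le_add hqp hqp
    · rw [ENNReal.ofReal_of_nonpos h, nonpos_iff_eq_zero] at hqp
      simp [hqp]

end Steiner

section Convergence

variable {E : Type*} [NormedAddCommGroup E] [InnerProductSpace ℝ E]
  [FiniteDimensional ℝ E] [MeasurableSpace E] [BorelSpace E]

lemma lintegral_volume_inter_preimage_add {F G : Set E} (hF : MeasurableSet F)
    (hG : MeasurableSet G) :
    ∫⁻ w : E, volume (F ∩ (fun x => x + w) ⁻¹' G) = volume F * volume G := by
  have hm : MeasurableSet {p : E × E | p.2 ∈ F ∧ p.2 + p.1 ∈ G} :=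
    (hF.preimage measurable_snd).inter (hG.preimage (measurable_snd.add measurable_fst))
  have h1 := Measure.prod_apply (μ := (volume : Measure E)) (ν := (volume : Measure E)) hm
  have h2 := Measure.prod_apply_symm (μ := (volume : Measure E)) (ν := (volume : Measure E)) hm
  have e1 : ∀ w : E, Prod.mk w ⁻¹' {p : E × E | p.2 ∈ F ∧ p.2 + p.1 ∈ G} =
      F ∩ (fun x => x + w) ⁻¹' G := fun w => rfl
  have e2 : ∀ x : E, volume ((fun w => (w, x)) ⁻¹' {p : E × E | p.2 ∈ F ∧ p.2 + p.1 ∈ G}) =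
      F.indicator (fun _ => volume G) x := by
    intro x
    by_cases hx : x ∈ F
    · rw [indicator_of_mem hx, ← measure_preimage_add volume x G]
      congr 1
      ext w
      simp [hx]
    · simp [hx]
  simp only [e1] at h1
  simp only [e2] at h2
  rw [← h1, h2, lintegral_indicator hF, setLIntegral_const, mul_comm]

/-- If `L` misses part of a centered ball of no larger volume, then some symmetral of `L`
overlaps the ball better, by an amount depending only on the size of the missing part. -/
lemma exists_steiner_gain {L : Set E} (hL : IsCompact L) {r R : ℝ} (hrR : r ≤ R)
    (hLR : L ⊆ closedBall 0 R) (hvol : volume (closedBall (0 : E) r) ≤ volume L)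
    {δ : ENNReal} (hδ0 : δ ≠ 0) (hδ : δ ≤ volume (closedBall 0 r \ L)) :
    ∃ u : E, ‖u‖ = 1 ∧
      volume (L ∩ closedBall 0 r) + δ * δ / (volume (closedBall (0 : E) (2 * R)) + 1) ≤
        volume (steiner u L ∩ closedBall 0 r) := by
  have hLm := hL.measurableSet
  have hBm : MeasurableSet (closedBall (0 : E) r) := measurableSet_closedBall
  set B := closedBall (0 : E) r
  set V := volume (closedBall (0 : E) (2 * R))
  have hV : V ≠ ⊤ := measure_closedBall_lt_top.ne
  have hδt : δ ≠ ⊤ := ne_top_of_le_ne_top (measure_closedBall_lt_top (x := (0 : E)) (r := r)).ne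
    (hδ.trans (measure_mono sdiff_subset))
  set c := δ * δ / (V + 1) with hc
  have hV1 : V + 1 ≠ ⊤ := by simp [hV]
  have hc0 : c ≠ 0 := ENNReal.div_ne_zero.2 ⟨mul_ne_zero hδ0 hδ0, hV1⟩
  have hcV : c * (V + 1) = δ * δ := ENNReal.div_mul_cancel (by simp) hV1
  have hct : c ≠ ⊤ := by
    rw [hc]; exact ENNReal.div_ne_top (ENNReal.mul_ne_top hδt hδt) (by simp)
  have hδ' : δ ≤ volume (L \ B) := by
    refine hδ.trans ?_
    have hfin : volume (B ∩ L) ≠ ⊤ :=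
      ne_top_of_le_ne_top hL.measure_lt_top.ne (measure_mono inter_subset_right)
    rw [← measure_inter_add_sdiff B hLm, ← measure_inter_add_sdiff L hBm, inter_comm L B] at hvol
    exact (ENNReal.add_le_add_iff_left hfin).1 hvol
  obtain ⟨w, hw⟩ : ∃ w : E, c ≤ volume ((L \ B) ∩ (fun x => x + w) ⁻¹' (B \ L)) := by
    by_contra! hcon
    have h1 := lintegral_volume_inter_preimage_add (hLm.diff hBm) (hBm.diff hLm)
    have h2 : ∫⁻ w : E, volume ((L \ B) ∩ (fun x => x + w) ⁻¹' (B \ L)) ≤ c * V := by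
      rw [← setLIntegral_const, ← lintegral_indicator measurableSet_closedBall]
      refine lintegral_mono fun w => ?_
      by_cases hw : w ∈ closedBall (0 : E) (2 * R)
      · rw [indicator_of_mem hw]; exact (hcon w).le
      · rw [indicator_of_notMem hw, nonpos_iff_eq_zero]
        convert measure_empty (μ := (volume : Measure E))
        refine eq_empty_of_forall_notMem fun x hx => hw ?_
        have hx1 := hLR hx.1.1
        have hx2 : x + w ∈ B := hx.2.1
        rw [mem_closedBall, dist_zero_right] at hx1 hx2 ⊢
        have : ‖w‖ ≤ ‖x + w‖ + ‖x‖ := by simpa using norm_sub_le (x + w) x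
        linarith
    have h3 : c * V + c ≤ c * V := by
      calc c * V + c = δ * δ := by rw [← hcV]; ring
        _ ≤ _ := mul_le_mul' hδ' hδ
        _ ≤ _ := h1 ▸ h2
    exact absurd h3 (not_le.2 (ENNReal.lt_add_right (ENNReal.mul_ne_top hct hV) hc0))
  have hw0 : w ≠ 0 := by
    rintro rfl
    refine hc0 (nonpos_iff_eq_zero.1 (hw.trans (le_of_eq ?_)))
    convert measure_empty (μ := (volume : Measure E))
    refine eq_empty_of_forall_notMem fun x hx => hx.1.2 ?_
    have : x + 0 ∈ B := hx.2.1
    simpa using this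
  have hu : ‖(‖w‖⁻¹ • w)‖ = 1 := norm_smul_inv_norm (𝕜 := ℝ) hw0
  refine ⟨‖w‖⁻¹ • w, hu, ?_⟩
  have := volume_inter_add_le_volume_steiner_inter hu hL r ‖w‖
  rw [smul_inv_smul₀ (norm_ne_zero_iff.2 hw0)] at this
  exact (add_le_add_right hw _).trans this

/-- A closed convex set that misses only a small part of a centered ball contains a slightly
smaller ball. -/
lemma closedBall_subset_of_volume_diff_lt {L : Set E} (hL : IsClosed L) (hconv : Convex ℝ L)
    {r s : ℝ} (hs : 0 ≤ s)
    (h : volume (closedBall 0 r \ L) < volume (closedBall (0 : E) s)) :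
    closedBall 0 (r - 2 * s) ⊆ L := by
  intro x hx
  by_contra hxL
  rw [mem_closedBall, dist_zero_right] at hx
  obtain ⟨v, hv, hsep⟩ : ∃ v : E, ‖v‖ ≤ 1 ∧ ∀ z ∈ closedBall (x + s • v) s, z ∉ L := by
    obtain ⟨f, a, hf, ha⟩ := geometric_hahn_banach_closed_point hconv hL hxL
    let v := (InnerProductSpace.toDual ℝ E).symm f
    have hfv : ∀ z, f z = inner ℝ v z := fun z =>
      (InnerProductSpace.toDual_symm_apply (x := z) (y := f)).symm
    rcases eq_or_ne v 0 with hv | hv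
    · refine ⟨0, by simp, fun z _ hz => ?_⟩
      have h1 := hf z hz
      rw [hfv, hv, inner_zero_left] at h1 ha
      linarith
    have hpos : 0 < ‖v‖ := norm_pos_iff.2 hv
    refine ⟨‖v‖⁻¹ • v, (norm_smul_inv_norm (𝕜 := ℝ) hv).le, fun z hz hzL => ?_⟩
    have h1 := hf z hzL
    rw [hfv] at h1 ha
    rw [mem_closedBall, dist_eq_norm] at hz
    have h2 := abs_le.1 (abs_real_inner_le_norm v (z - (x + s • ‖v‖⁻¹ • v)))
    have h3 : ‖v‖ * ‖z - (x + s • ‖v‖⁻¹ • v)‖ ≤ ‖v‖ * s :=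
      mul_le_mul_of_nonneg_left hz hpos.le
    have h4 : (inner ℝ v (z - (x + s • ‖v‖⁻¹ • v)) : ℝ) =
        inner ℝ v z - (inner ℝ v x + s * ‖v‖) := by
      rw [inner_sub_right, inner_add_right, inner_smul_right, inner_smul_right,
        real_inner_self_eq_norm_sq]
      field_simp
    rw [h4] at h2
    linarith [h2.1]
  refine absurd h (not_lt.2 ?_)
  rw [← Measure.addHaar_closedBall_center volume (x + s • v) s]
  refine measure_mono fun z hz => ⟨?_, hsep z hz⟩
  rw [mem_closedBall, dist_eq_norm] at hz
  rw [mem_closedBall, dist_zero_right]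
  have h1 : ‖z‖ ≤ ‖z - (x + s • v)‖ + (‖x‖ + ‖s • v‖) :=
    (norm_le_norm_sub_add z (x + s • v)).trans (add_le_add_right (norm_add_le _ _) _)
  rw [norm_smul, Real.norm_eq_abs, abs_of_nonneg hs] at h1
  nlinarith [mul_le_mul_of_nonneg_left hv hs]

/-- Iterated Steiner symmetrization: there are convex bodies inside which polytopes are no larger
than those inside `K`, and which miss an arbitrarily small part of the ball. -/
lemma exists_symmetral_volume_diff_lt {K : Set E} (hKc : IsCompact K) (hKconv : Convex ℝ K)
    {r : ℝ} (hvol : volume (closedBall (0 : E) r) ≤ volume K) (N : ℕ)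
    {δ : ENNReal} (hδ0 : δ ≠ 0) :
    ∃ L : Set E, IsClosed L ∧ Convex ℝ L ∧ volume (closedBall 0 r \ L) < δ ∧
      ∀ S : Finset E, S.card ≤ N → (S : Set E) ⊆ L → ∃ T : Finset E, T.card ≤ N ∧
        (T : Set E) ⊆ K ∧
        volume (convexHull ℝ (S : Set E)) ≤ volume (convexHull ℝ (T : Set E)) := by
  by_contra! hcon
  obtain ⟨R₀, hR₀⟩ := hKc.isBounded.subset_closedBall (0 : E)
  set R := max r R₀
  set c := δ * δ / (volume (closedBall (0 : E) (2 * R)) + 1)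
  have hc0 : c ≠ 0 := ENNReal.div_ne_zero.2
    ⟨mul_ne_zero hδ0 hδ0, by simp [measure_closedBall_lt_top.ne]⟩
  have iter : ∀ k : ℕ, ∃ L : Set E, IsCompact L ∧ Convex ℝ L ∧ L ⊆ closedBall 0 R ∧
      volume (closedBall (0 : E) r) ≤ volume L ∧ k * c ≤ volume (L ∩ closedBall 0 r) ∧
      ∀ S : Finset E, S.card ≤ N → (S : Set E) ⊆ L → ∃ T : Finset E, T.card ≤ N ∧
        (T : Set E) ⊆ K ∧
        volume (convexHull ℝ (S : Set E)) ≤ volume (convexHull ℝ (T : Set E)) := by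
    intro k
    induction k with
    | zero =>
      exact ⟨K, hKc, hKconv, hR₀.trans (closedBall_subset_closedBall (le_max_right _ _)), hvol,
        by simp, fun S hS hSK => ⟨S, hS, hSK, le_rfl⟩⟩
    | succ k ih =>
      obtain ⟨L, hLc, hLconv, hLR, hLvol, hLk, hLS⟩ := ih
      have hδ : δ ≤ volume (closedBall 0 r \ L) := by
        by_contra! hlt
        obtain ⟨S, hS, hSL, hST⟩ := hcon L hLc.isClosed hLconv hlt
        obtain ⟨T, hT, hTK, hle⟩ := hLS S hS hSL
        exact absurd hle (not_le.2 (hST T hT hTK))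
      obtain ⟨u, hu, hgain⟩ := exists_steiner_gain hLc (le_max_left r R₀) hLR hLvol hδ0 hδ
      refine ⟨steiner u L, isCompact_steiner hu hLc, convex_steiner u hLconv,
        steiner_subset_closedBall hu hLR, hLvol.trans (volume_le_volume_steiner hu hLc), ?_, ?_⟩
      · refine le_trans ?_ hgain
        rw [Nat.cast_succ, add_mul, one_mul]
        exact add_le_add_left hLk _
      · intro S hS hSL
        obtain ⟨S', hS', hSL', hle⟩ := exists_polytope_of_subset_steiner hu hLconv S hSL
        obtain ⟨T, hT, hTK, hle'⟩ := hLS S' (hS'.trans hS) hSL'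
        exact ⟨T, hT, hTK, hle.trans hle'⟩
  obtain ⟨k, hk⟩ := ENNReal.exists_nat_mul_gt hc0
    (measure_closedBall_lt_top (μ := (volume : Measure E)) (x := 0) (r := r)).ne
  obtain ⟨L, -, -, -, -, hLk, -⟩ := iter k
  exact absurd (hLk.trans (measure_mono inter_subset_right)) (not_le.2 hk)

/-- Polytopes inscribed in the ball are matched, up to an arbitrarily small homothety, by
polytopes inscribed in `K`. -/
lemma exists_polytope_volume_ge {K : Set E} (hKc : IsCompact K) (hKconv : Convex ℝ K)
    {r : ℝ} (hr : 0 < r) (hvol : volume (closedBall (0 : E) r) ≤ volume K)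
    (S : Finset E) (hS : (S : Set E) ⊆ closedBall 0 r) {c : ℝ} (hc0 : 0 ≤ c) (hc1 : c < 1) :
    ∃ T : Finset E, T.card ≤ S.card ∧ (T : Set E) ⊆ K ∧
      ENNReal.ofReal (c ^ Module.finrank ℝ E) * volume (convexHull ℝ (S : Set E)) ≤
        volume (convexHull ℝ (T : Set E)) := by
  classical
  have hs : 0 < (1 - c) * r / 2 := by nlinarith
  obtain ⟨L, hLc, hLconv, hlt, hLS⟩ := exists_symmetral_volume_diff_lt hKc hKconv hvol S.card
    (measure_closedBall_pos volume (0 : E) hs).ne'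
  have hsub := closedBall_subset_of_volume_diff_lt hLc hLconv hs.le hlt
  obtain ⟨T, hT, hTK, hle⟩ := hLS (S.image (c • ·)) Finset.card_image_le (by
    intro z hz
    obtain ⟨x, hx, rfl⟩ := Finset.mem_image.1 hz
    refine hsub ?_
    have hxr := hS hx
    rw [mem_closedBall, dist_zero_right] at hxr ⊢
    rw [norm_smul, Real.norm_eq_abs, abs_of_nonneg hc0]
    nlinarith)
  refine ⟨T, hT, hTK, le_trans (le_of_eq ?_) hle⟩
  rw [Finset.coe_image, image_smul, convexHull_smul, Measure.addHaar_smul,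
    abs_of_nonneg (pow_nonneg hc0 _)]

end Convergence

/-- **Macbeath's inequality.** For a convex body `K ⊂ ℝⁿ` and the centered closed
ball `K* = closedBall 0 r` of the same volume, the best approximation of `K` by inscribed
polytopes with at most `N` vertices is at least as good as that of `K*`. -/
theorem macbeath_inequality
    (n N : ℕ) (hn : 1 ≤ n) (hN : n + 2 ≤ N)
    (K : Set (Eucl n)) (hKc : IsCompact K) (hKconv : Convex ℝ K)
    (hKint : (interior K).Nonempty)
    (r : ℝ) (hr : 0 ≤ r)
    (hvol : volume (closedBall (0 : Eucl n) r) = volume K) :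
    sInf ((fun P => volume (K \ P)) '' PolyIn N K) ≤
      sInf ((fun P => volume (closedBall (0 : Eucl n) r \ P)) ''
        PolyIn N (closedBall (0 : Eucl n) r)) := by
  have hKr : 0 < volume (closedBall (0 : Eucl n) r) := by
    rw [hvol]
    exact (isOpen_interior.measure_pos volume hKint).trans_le (measure_mono interior_subset)
  have : Nonempty (Fin n) := ⟨⟨0, hn⟩⟩
  have hr0 : 0 < r := by
    refine lt_of_le_of_ne hr fun h => ?_
    rw [← h, closedBall_zero, measure_singleton] at hKr
    exact lt_irrefl _ hKr
  refine le_sInf ?_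
  rintro _ ⟨_, ⟨⟨S, hSN, rfl⟩, hSr⟩, rfl⟩
  have hcomp : ∀ T : Finset (Eucl n), IsCompact (convexHull ℝ (T : Set (Eucl n))) := fun T =>
    T.finite_toSet.isCompact_convexHull ℝ
  have hdiff : ∀ (T : Finset (Eucl n)) (M : Set (Eucl n)),
      convexHull ℝ (T : Set (Eucl n)) ⊆ M → volume (M \ convexHull ℝ (T : Set (Eucl n))) =
        volume M - volume (convexHull ℝ (T : Set (Eucl n))) := fun T M h =>
    measure_sdiff h (hcomp T).measurableSet.nullMeasurableSet (hcomp T).measure_lt_top.ne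
  simp only [hdiff S _ hSr]
  have hbound : ∀ c : ℝ, 0 ≤ c → c < 1 →
      sInf ((fun P => volume (K \ P)) '' PolyIn N K) ≤ volume (closedBall (0 : Eucl n) r) -
        ENNReal.ofReal (c ^ Module.finrank ℝ (Eucl n)) *
          volume (convexHull ℝ (S : Set (Eucl n))) := by
    intro c hc0 hc1
    obtain ⟨T, hT, hTK, hle⟩ := exists_polytope_volume_ge hKc hKconv hr0 hvol.le S
      ((subset_convexHull ℝ _).trans hSr) hc0 hc1
    have hTK' : convexHull ℝ (T : Set (Eucl n)) ⊆ K := convexHull_min hTK hKconv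
    have hmem : convexHull ℝ (T : Set (Eucl n)) ∈ PolyIn N K :=
      ⟨⟨T, hT.trans hSN, rfl⟩, hTK'⟩
    refine (sInf_le (mem_image_of_mem _ hmem)).trans ?_
    simp only [hdiff T K hTK', hvol]
    exact tsub_le_tsub_left hle _
  have hlim : Tendsto (fun c : ℝ => volume (closedBall (0 : Eucl n) r) -
      ENNReal.ofReal (c ^ Module.finrank ℝ (Eucl n)) * volume (convexHull ℝ (S : Set (Eucl n))))
      (nhdsWithin 1 (Iio 1))
      (nhds (volume (closedBall (0 : Eucl n) r) - volume (convexHull ℝ (S : Set (Eucl n))))) := by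
    refine ENNReal.Tendsto.sub tendsto_const_nhds ?_ (Or.inl measure_closedBall_lt_top.ne)
    have h1 : Tendsto (fun c : ℝ => ENNReal.ofReal (c ^ Module.finrank ℝ (Eucl n)))
        (nhdsWithin 1 (Iio 1)) (nhds 1) := by
      have : Continuous fun c : ℝ => ENNReal.ofReal (c ^ Module.finrank ℝ (Eucl n)) :=
        ENNReal.continuous_ofReal.comp (continuous_pow _)
      simpa using (this.tendsto 1).mono_left nhdsWithin_le_nhds
    simpa using ENNReal.Tendsto.mul_const h1 (Or.inl one_ne_zero)
  refine ge_of_tendsto hlim ?_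
  filter_upwards [Ioo_mem_nhdsLT (zero_lt_one (α := ℝ))] with c hc
  exact hbound c hc.1.le hc.2
end
end
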